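/- arXiv:2106.13760 — 6 statements merged into one kernel-verified Lean document; each statement's English description precedes it below -/
import Mathlib

section
/- Let m ≥ 1, r ≥ 0, and let (Q_0,P_0), (Q_1,P_1), …, (Q_r,P_r) be r+1 pairs of m×m matrices of independent commuting indeterminates. For 0 ≤ k ≤ r define A_k := Σ_{i=0}^{r−k} Q_i P_{i+k}. Then with respect to the canonical Poisson bracket, for all 0 ≤ k,l ≤ r and all 1 ≤ a,b,c,d ≤ m: if k+l ≤ r then {(A_k)_{ab}, (A_l)_{cd}} = δ_{bc} (A_{k+l})_{ad} − δ_{ad} (A_{k+l})_{cb}, and if k+l > r then {(A_k)_{ab}, (A_l)_{cd}} = 0. That is, the matrices A_0,…,A_r realize the standard Lie–Poisson (Kirillov–Kostant–Souriau) bracket of the dual of the Takiff algebra gl_m ⊗ ℂ[z]/(z^{r+1}). -/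
/-!
The matrices `A_k = Σ_{i=0}^{r−k} Q_i P_{i+k}` realize the standard Lie–Poisson (KKS)
bracket of the dual of the Takiff algebra `gl_m ⊗ ℂ[z]/(z^{r+1})`.
-/

open MvPolynomial

noncomputable section

/-- Index type for the entries of `N` pairs of `m × m` matrices of indeterminates. -/
abbrev Idx (N m : ℕ) := Fin N × Bool × Fin m × Fin m

/-- The matrix `Q_α` of indeterminates. -/
def Qm (N m : ℕ) (α : Fin N) : Matrix (Fin m) (Fin m) (MvPolynomial (Idx N m) ℂ) :=
  Matrix.of fun i j => X (α, false, i, j)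

/-- The matrix `P_α` of indeterminates. -/
def Pm (N m : ℕ) (α : Fin N) : Matrix (Fin m) (Fin m) (MvPolynomial (Idx N m) ℂ) :=
  Matrix.of fun i j => X (α, true, i, j)

/-- The canonical Poisson bracket. -/
def pois {N m : ℕ} (f g : MvPolynomial (Idx N m) ℂ) : MvPolynomial (Idx N m) ℂ :=
  ∑ α : Fin N, ∑ i : Fin m, ∑ j : Fin m,
    (pderiv (α, true, i, j) f * pderiv (α, false, j, i) g
      - pderiv (α, true, i, j) g * pderiv (α, false, j, i) f)

/-- The Takiff parametrisation `A_k := Σ_{i=0}^{r−k} Q_i P_{i+k}` (given `r+1` pairs). -/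
def Amat (m r : ℕ) (k : ℕ) : Matrix (Fin m) (Fin m) (MvPolynomial (Idx (r+1) m) ℂ) :=
  ∑ i : Fin (r+1), ∑ j : Fin (r+1),
    if (j : ℕ) = (i : ℕ) + k then Qm (r+1) m i * Pm (r+1) m j else 0

end

/-!
For a scalar matrix `C` put `A(C) = ∑ C_ij Q_i P_j`. The derivative of `A(C)` in `P_α` is the column
combination `∑ C_βα Q_β`, and its derivative in `Q_α` is the row combination `∑ C_αγ P_γ`, so
contracting the two composes the coefficient matrices:
`{A(C)_ab, A(D)_cd} = δ_bc A(CD)_ad - δ_ad A(DC)_cb`. The Takiff matrix `A_k` is `A(S ^ k)` for the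
nilpotent shift `S`, whose powers commute and vanish from exponent `r + 1` on.
-/

section CoefficientMatrices

variable {N m : ℕ}

/-- The matrix `∑ i j, C i j • Q_i P_j` attached to a matrix `C` of scalars. The Takiff matrices
`A_k` are the special case where `C` is the `k`-th power of the nilpotent shift. -/
noncomputable def weightedQP (m : ℕ) (C : Matrix (Fin N) (Fin N) ℂ) :
    Matrix (Fin m) (Fin m) (MvPolynomial (Idx N m) ℂ) :=
  ∑ i, ∑ j, C i j • (Qm N m i * Pm N m j)

theorem weightedQP_apply (C : Matrix (Fin N) (Fin N) ℂ) (a b : Fin m) :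
    weightedQP m C a b =
      ∑ i, ∑ j, C i j • ∑ s, (X (i, false, a, s) * X (j, true, s, b)) := by
  simp only [weightedQP, Matrix.sum_apply, Matrix.smul_apply, Matrix.mul_apply, Qm, Pm,
    Matrix.of_apply]

theorem pderiv_Pm_weightedQP (C : Matrix (Fin N) (Fin N) ℂ) (a b i j : Fin m) (α : Fin N) :
    pderiv (α, true, i, j) (weightedQP m C a b) =
      if b = j then (∑ β, C β α • Qm N m β) a i else 0 := by
  simp [weightedQP_apply, Pi.single_apply, ite_and, Matrix.sum_apply, Qm]

theorem pderiv_Qm_weightedQP (C : Matrix (Fin N) (Fin N) ℂ) (a b i j : Fin m) (α : Fin N) :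
    pderiv (α, false, i, j) (weightedQP m C a b) =
      if a = i then (∑ γ, C α γ • Pm N m γ) j b else 0 := by
  simp [weightedQP_apply, Pi.single_apply, ite_and, Matrix.sum_apply, Pm]

theorem weightedQP_mul (C D : Matrix (Fin N) (Fin N) ℂ) :
    weightedQP m (C * D) =
      ∑ α, (∑ β, C β α • Qm N m β) * ∑ γ, D α γ • Pm N m γ := by
  simp only [weightedQP, Matrix.mul_apply, Finset.sum_smul, Finset.sum_mul_sum,
    smul_mul_smul_comm]
  rw [Finset.sum_comm_cycle, Finset.sum_comm_cycle]

theorem sum_pderiv_mul_pderiv_weightedQP (C D : Matrix (Fin N) (Fin N) ℂ) (a b c d : Fin m) :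
    ∑ α, ∑ i, ∑ j, pderiv (α, true, i, j) (weightedQP m C a b) *
        pderiv (α, false, j, i) (weightedQP m D c d) =
      if b = c then weightedQP m (C * D) a d else 0 := by
  simp only [pderiv_Pm_weightedQP, pderiv_Qm_weightedQP, ite_mul, zero_mul,
    Finset.sum_ite_eq, Finset.mem_univ, if_true]
  by_cases hbc : b = c
  · simp only [hbc, if_true, weightedQP_mul, Matrix.sum_apply, Matrix.mul_apply]
  · simp [hbc, eq_comm]

theorem pois_weightedQP (C D : Matrix (Fin N) (Fin N) ℂ) (a b c d : Fin m) :
    pois (weightedQP m C a b) (weightedQP m D c d) =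
      (if b = c then weightedQP m (C * D) a d else 0)
        - (if a = d then weightedQP m (D * C) c b else 0) := by
  simp only [pois, Finset.sum_sub_distrib, sum_pderiv_mul_pderiv_weightedQP, eq_comm (a := d)]

end CoefficientMatrices

/-- The `k`-th power of the nilpotent shift, i.e. the matrix of multiplication by `z ^ k` on
`R[z] / (z ^ N)` acting on row vectors in the monomial basis. -/
def shiftMatrix (R : Type*) [Zero R] [One R] (N k : ℕ) : Matrix (Fin N) (Fin N) R :=
  Matrix.of fun i j => if (j : ℕ) = i + k then 1 else 0

theorem shiftMatrix_mul_shiftMatrix (R : Type*) [NonAssocSemiring R] (N k l : ℕ) :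
    shiftMatrix R N k * shiftMatrix R N l = shiftMatrix R N (k + l) := by
  ext i j
  simp only [Matrix.mul_apply, shiftMatrix, Matrix.of_apply, ite_mul, one_mul, zero_mul]
  by_cases hik : (i : ℕ) + k < N
  · have eq_mid_iff (s : Fin N) : (s : ℕ) = i + k ↔ s = ⟨i + k, hik⟩ := by
      rw [Fin.ext_iff]
    simp only [eq_mid_iff, Finset.sum_ite_eq', Finset.mem_univ, if_true, add_assoc]
  · rw [if_neg (by omega)]
    exact Finset.sum_eq_zero fun s _ => if_neg (by omega)

theorem shiftMatrix_eq_zero (R : Type*) [Zero R] [One R] {N k : ℕ} (h : N ≤ k) :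
    shiftMatrix R N k = 0 := by
  ext i j
  exact if_neg (by omega)

theorem Amat_eq_weightedQP (m r k : ℕ) :
    Amat m r k = weightedQP m (shiftMatrix ℂ (r + 1) k) := by
  simp only [Amat, weightedQP, shiftMatrix, Matrix.of_apply, ite_smul, one_smul, zero_smul]

theorem Amat_eq_zero {m r k : ℕ} (h : r < k) : Amat m r k = 0 := by
  simp [Amat_eq_weightedQP, shiftMatrix_eq_zero ℂ h, weightedQP]

theorem pois_Amat (m r k l : ℕ) (a b c d : Fin m) :
    pois (Amat m r k a b) (Amat m r l c d) =
      (if b = c then Amat m r (k + l) a d else 0)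
        - (if a = d then Amat m r (k + l) c b else 0) := by
  simp only [Amat_eq_weightedQP, pois_weightedQP, shiftMatrix_mul_shiftMatrix, add_comm l k]

/-- the matrices `A_0, …, A_r` satisfy the graded Lie–Poisson bracket of the
dual Takiff algebra: `{(A_k)_{ab}, (A_l)_{cd}} = δ_{bc}(A_{k+l})_{ad} − δ_{ad}(A_{k+l})_{cb}`
for `k+l ≤ r`, and `0` for `k+l > r`. -/
theorem statement2 (m r : ℕ) (hm : 1 ≤ m) (k l : ℕ) (hk : k ≤ r) (hl : l ≤ r)
    (a b c d : Fin m) :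
    (k + l ≤ r →
      pois ((Amat m r k) a b) ((Amat m r l) c d) =
        (if b = c then (Amat m r (k + l)) a d else 0)
          - (if a = d then (Amat m r (k + l)) c b else 0)) ∧
    (r < k + l → pois ((Amat m r k) a b) ((Amat m r l) c d) = 0) := by
  refine ⟨fun _ => pois_Amat m r k l a b c d, fun h => ?_⟩
  simp [pois_Amat, Amat_eq_zero h]
end

section
/- Let m ≥ 2 and r ≥ 1. Let R := ℂ[z]/(z^{r+1}) and regard Mat_m(R) as a Lie algebra over ℂ with the commutator bracket; write z also for the image of the variable in R. Let T_{kj} ∈ ℂ for 0 ≤ k,j ≤ r, not all zero, and for 0 ≤ k ≤ r define the linear map B_k : Mat_m(ℂ) → Mat_m(R) by B_k(X) := Σ_{j=0}^{r} T_{kj}·(X z^j). Then the following are equivalent: (1) for all X, Y ∈ Mat_m(ℂ) and all 0 ≤ k,l ≤ r one has ⁅B_k(X), B_l(Y)⁆ = B_{k+l}(⁅X,Y⁆) whenever k+l ≤ r, and ⁅B_k(X), B_l(Y)⁆ = 0 whenever k+l > r; (2) setting t_j := T_{1j} for 1 ≤ j ≤ r, for every 0 ≤ k,j ≤ r the scalar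 T_{kj} equals the coefficient of ε^j in the polynomial (Σ_{l=1}^{r} t_l ε^l)^k ∈ ℂ[ε]. In particular T_{00} = 1, T_{0j} = 0 for j > 0, T_{k0} = 0 for k > 0, and T_{kj} = 0 for j < k. -/
/-!
Classification of the linear automorphisms of the Takiff algebra
`Mat_m(ℂ[z]/(z^{r+1}))` that preserve the graded bracket structure.
-/

noncomputable section

/-- The truncated polynomial ring `ℂ[z]/(z^{r+1})`. -/
abbrev TruncPoly (r : ℕ) : Type :=
  Polynomial ℂ ⧸ Ideal.span ({(Polynomial.X : Polynomial ℂ) ^ (r + 1)} : Set (Polynomial ℂ))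

/-- The image `z` of the variable in `ℂ[z]/(z^{r+1})`. -/
def zbar (r : ℕ) : TruncPoly r := Ideal.Quotient.mk _ Polynomial.X

/-- The map `B_k : Mat_m(ℂ) → Mat_m(ℂ[z]/(z^{r+1}))`, `B_k(X) = Σ_{j=0}^r T_{kj}·(X z^j)`. -/
def Bmap (m r : ℕ) (T : ℕ → ℕ → ℂ) (k : ℕ) (M : Matrix (Fin m) (Fin m) ℂ) :
    Matrix (Fin m) (Fin m) (TruncPoly r) :=
  ∑ j ∈ Finset.range (r + 1),
    (algebraMap ℂ (TruncPoly r) (T k j) * zbar r ^ j) • M.map (algebraMap ℂ (TruncPoly r))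

end

/-!
Let `K` be a commutative ring without zero divisors. Since `⁅a X, b Y⁆ = ab ⁅X, Y⁆` for scalars
`a`, `b` in `K[z]/(z^{r+1})`, and commutators of matrices of size at least two detect scalars, the
bracket relations say exactly that the rows `p_k = Σ_j T_{kj} z^j` satisfy `p_k p_l = p_{k+l}`, read
as `0` when `k + l > r`. In particular `p_0` is idempotent, hence `0` or `1`; the first option kills
every `p_k = p_0 p_k`. So `p_k = p_1 ^ k`, and `p_1 ^ (r+1) = 0` forces the constant term of `p_1`
to vanish.
-/

section TruncatedMultiplicative

/-- The elements `p 0, …, p r` multiply like the monomials `1, z, …, z ^ r` modulo `z ^ (r + 1)`.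
The values of `p` beyond `r` are irrelevant. -/
def TruncatedMultiplicative {R : Type*} [Mul R] [Zero R] (r : ℕ) (p : ℕ → R) : Prop :=
  ∀ k ≤ r, ∀ l ≤ r, (k + l ≤ r → p k * p l = p (k + l)) ∧ (r < k + l → p k * p l = 0)

variable {R : Type*} [MonoidWithZero R] {r : ℕ} {p : ℕ → R}

namespace TruncatedMultiplicative

theorem isIdempotentElem_zero (h : TruncatedMultiplicative r p) : IsIdempotentElem (p 0) :=
  (h 0 r.zero_le 0 r.zero_le).1 r.zero_le

theorem eq_zero_of_apply_zero (h : TruncatedMultiplicative r p) (h0 : p 0 = 0) {k : ℕ}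
    (hk : k ≤ r) : p k = 0 := by
  simpa [h0] using ((h 0 r.zero_le k hk).1 (by simpa using hk)).symm

theorem eq_pow (h : TruncatedMultiplicative r p) (h0 : p 0 = 1) {k : ℕ} (hk : k ≤ r) :
    p k = p 1 ^ k := by
  induction k with
  | zero => rw [h0, pow_zero]
  | succ k ih => rw [pow_succ, ← ih (by omega), (h k (by omega) 1 (by omega)).1 hk]

theorem pow_succ_eq_zero (h : TruncatedMultiplicative r p) (h0 : p 0 = 1) (hr : 1 ≤ r) :
    p 1 ^ (r + 1) = 0 := by
  rw [pow_succ, ← h.eq_pow h0 le_rfl]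
  exact (h r le_rfl 1 hr).2 r.lt_succ_self

theorem of_eq_pow {x : R} (hx : x ^ (r + 1) = 0) (h : ∀ k ≤ r, p k = x ^ k) :
    TruncatedMultiplicative r p := by
  intro k hk l hl
  rw [h k hk, h l hl, ← pow_add]
  exact ⟨fun hkl ↦ (h _ hkl).symm, fun hkl ↦ pow_eq_zero_of_le hkl hx⟩

end TruncatedMultiplicative

end TruncatedMultiplicative

section MatrixCommutator

variable {n K R : Type*} [Fintype n]

theorem lie_smul_map_smul_map [Ring K] [CommRing R] (f : K →+* R) (a b : R) (X Y : Matrix n n K) :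
    ⁅a • X.map f, b • Y.map f⁆ = (a * b) • ⁅X, Y⁆.map f := by
  rw [Ring.lie_def, Ring.lie_def, Matrix.map_sub _ (map_sub f), Matrix.map_mul, Matrix.map_mul,
    smul_mul_smul_comm, smul_mul_smul_comm, mul_comm b a, smul_sub]

theorem eq_of_forall_smul_lie_map_eq [Nontrivial n] [Ring K] [Ring R] (f : K →+* R) {a b : R}
    (h : ∀ X Y : Matrix n n K, a • ⁅X, Y⁆.map f = b • ⁅X, Y⁆.map f) : a = b := by
  classical
  obtain ⟨i, j, hij⟩ := exists_pair_ne n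
  have entry_eq_one :
      (⁅Matrix.single i j (1 : K), Matrix.single j i (1 : K)⁆ : Matrix n n K) i i = 1 := by
    simp [Ring.lie_def, hij.symm]
  simpa [entry_eq_one] using congr_fun₂ (h (Matrix.single i j 1) (Matrix.single j i 1)) i i

theorem forall_lie_smul_map_iff_truncatedMultiplicative [Nontrivial n] [Ring K] [CommRing R]
    (f : K →+* R) (r : ℕ) (p : ℕ → R) :
    (∀ X Y : Matrix n n K, ∀ k ≤ r, ∀ l ≤ r,
        (k + l ≤ r → ⁅p k • X.map f, p l • Y.map f⁆ = p (k + l) • ⁅X, Y⁆.map f) ∧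
        (r < k + l → ⁅p k • X.map f, p l • Y.map f⁆ = 0)) ↔
      TruncatedMultiplicative r p := by
  simp only [lie_smul_map_smul_map]
  refine ⟨fun h k hk l hl ↦ ⟨fun hkl ↦ ?_, fun hkl ↦ ?_⟩, fun h X Y k hk l hl ↦
    ⟨fun hkl ↦ by rw [(h k hk l hl).1 hkl], fun hkl ↦ by rw [(h k hk l hl).2 hkl, zero_smul]⟩⟩
  · exact eq_of_forall_smul_lie_map_eq f fun X Y ↦ (h X Y k hk l hl).1 hkl
  · refine eq_of_forall_smul_lie_map_eq (n := n) f fun X Y ↦ ?_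
    rw [(h X Y k hk l hl).2 hkl, zero_smul]

end MatrixCommutator

section TruncatedPolynomial

open Polynomial

variable {K : Type*} [CommRing K] {r : ℕ}

/-- The truncated polynomial ring `K[z]/(z^{r+1})`; for `K = ℂ` this is `TruncPoly r`. -/
abbrev TruncatedPolynomial (K : Type*) [CommRing K] (r : ℕ) : Type _ :=
  K[X] ⧸ Ideal.span ({X ^ (r + 1)} : Set K[X])

namespace TruncatedPolynomial

/-- Truncation of polynomials modulo `z^{r+1}`. -/
noncomputable abbrev mk (r : ℕ) : K[X] →+* TruncatedPolynomial K r :=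
  Ideal.Quotient.mk _

theorem mk_eq_mk_iff {a b : K[X]} : mk r a = mk r b ↔ ∀ j ≤ r, a.coeff j = b.coeff j := by
  simp only [Ideal.Quotient.eq, Ideal.mem_span_singleton, X_pow_dvd_iff, coeff_sub, sub_eq_zero,
    Nat.lt_succ_iff]

theorem mk_pow_succ_eq_zero {a : K[X]} (ha : a.coeff 0 = 0) : mk r a ^ (r + 1) = 0 := by
  rw [← map_pow, Ideal.Quotient.eq_zero_iff_mem, Ideal.mem_span_singleton]
  exact pow_dvd_pow_of_dvd (X_dvd_iff.2 ha) _

theorem coeff_zero_eq_zero_of_isNilpotent_mk [IsReduced K] {a : K[X]} (ha : IsNilpotent (mk r a)) :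
    a.coeff 0 = 0 := by
  obtain ⟨n, hn⟩ := ha
  have coeff_pow : constantCoeff (a ^ n) = 0 := by
    rw [← map_pow, ← map_zero (mk r), mk_eq_mk_iff] at hn
    simpa using hn 0 r.zero_le
  rw [map_pow] at coeff_pow
  exact eq_zero_of_pow_eq_zero coeff_pow

theorem isIdempotentElem_coeff_zero {a : K[X]} (ha : IsIdempotentElem (mk r a)) :
    IsIdempotentElem (a.coeff 0) := by
  rw [IsIdempotentElem, ← map_mul, mk_eq_mk_iff] at ha
  rw [IsIdempotentElem, ← mul_coeff_zero]
  exact ha 0 r.zero_le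

theorem eq_zero_or_one_of_isIdempotentElem [NoZeroDivisors K] {e : TruncatedPolynomial K r}
    (he : IsIdempotentElem e) : e = 0 ∨ e = 1 := by
  obtain ⟨a, rfl⟩ := Ideal.Quotient.mk_surjective e
  have hc : IsIdempotentElem (a.coeff 0) := isIdempotentElem_coeff_zero he
  have eq_const : mk r a = mk r (C (a.coeff 0)) := by
    refine eq_of_isNilpotent_sub_of_isIdempotentElem he ((hc.map C).map (mk r)) ⟨r + 1, ?_⟩
    rw [← map_sub]
    exact mk_pow_succ_eq_zero (by simp)
  rw [eq_const]
  exact (IsIdempotentElem.iff_eq_zero_or_one.1 hc).imp (fun h ↦ by simp [h]) (fun h ↦ by simp [h])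

end TruncatedPolynomial

end TruncatedPolynomial

section TakiffMap

open Polynomial TruncatedPolynomial

variable {K : Type*} [CommRing K] {r : ℕ}

/-- The polynomial `Σ_{j=0}^r t_j z^j` with coefficient sequence `t` cut off after degree `r`. -/
noncomputable def rowPoly (r : ℕ) (t : ℕ → K) : K[X] :=
  ∑ j ∈ Finset.range (r + 1), C (t j) * X ^ j

/-- The map `M ↦ Σ_{j=0}^r t_j (M z^j)` from `Mat_n(K)` to `Mat_n(K[z]/(z^{r+1}))`. With `t` the
`k`-th row of `T` it is the map `B_k`, definitionally equal to `Bmap` for `K = ℂ`. -/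
noncomputable def takiffMap {n : Type*} (r : ℕ) (t : ℕ → K) (M : Matrix n n K) :
    Matrix n n (TruncatedPolynomial K r) :=
  ∑ j ∈ Finset.range (r + 1),
    (algebraMap K (TruncatedPolynomial K r) (t j) * mk r X ^ j) •
      M.map (algebraMap K (TruncatedPolynomial K r))

theorem takiffMap_eq_smul_map {n : Type*} (t : ℕ → K) (M : Matrix n n K) :
    takiffMap r t M = mk r (rowPoly r t) • M.map (algebraMap K (TruncatedPolynomial K r)) := by
  simp only [takiffMap, rowPoly, map_sum, map_mul, map_pow, Finset.sum_smul]
  rfl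

theorem coeff_rowPoly (t : ℕ → K) {j : ℕ} (hj : j ≤ r) : (rowPoly r t).coeff j = t j := by
  simp [rowPoly, hj]

theorem rowPoly_eq_C_add_sum_Icc (r : ℕ) (t : ℕ → K) :
    rowPoly r t = C (t 0) + ∑ l ∈ Finset.Icc 1 r, C (t l) * X ^ l := by
  rw [rowPoly, Finset.range_eq_Ico, Finset.sum_eq_sum_Ico_succ_bot (by omega), pow_zero, mul_one,
    zero_add, Finset.Ico_add_one_right_eq_Icc]

theorem mk_rowPoly_eq_mk_iff (t : ℕ → K) (q : K[X]) :
    mk r (rowPoly r t) = mk r q ↔ ∀ j ≤ r, t j = q.coeff j := by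
  rw [mk_eq_mk_iff]
  exact forall₂_congr fun j hj ↦ by rw [coeff_rowPoly t hj]

theorem mk_rowPoly_zero_eq_one [NoZeroDivisors K] {T : ℕ → ℕ → K}
    (hT : ¬ ∀ k ≤ r, ∀ j ≤ r, T k j = 0)
    (h : TruncatedMultiplicative r fun k ↦ mk r (rowPoly r (T k))) :
    mk r (rowPoly r (T 0)) = 1 := by
  refine (eq_zero_or_one_of_isIdempotentElem h.isIdempotentElem_zero).resolve_left fun h0 ↦ hT ?_
  intro k hk
  have row_eq_zero : mk r (rowPoly r (T k)) = mk r 0 := by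
    rw [map_zero, h.eq_zero_of_apply_zero h0 hk]
  simpa only [coeff_zero] using (mk_rowPoly_eq_mk_iff (T k) 0).1 row_eq_zero

theorem truncatedMultiplicative_mk_rowPoly_iff [NoZeroDivisors K] {T : ℕ → ℕ → K}
    (hT : ¬ ∀ k ≤ r, ∀ j ≤ r, T k j = 0) :
    TruncatedMultiplicative r (fun k ↦ mk r (rowPoly r (T k))) ↔
      ∀ k ≤ r, mk r (rowPoly r (T k)) =
        mk r (∑ l ∈ Finset.Icc 1 r, C (T 1 l) * X ^ l) ^ k := by
  refine ⟨fun h k hk ↦ ?_, .of_eq_pow (mk_pow_succ_eq_zero (by simp))⟩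
  have h0 := mk_rowPoly_zero_eq_one hT h
  obtain rfl | hk0 := k.eq_zero_or_pos
  · rw [h0, pow_zero]
  have T_one_zero : T 1 0 = 0 := by
    rw [← coeff_rowPoly (T 1) r.zero_le]
    exact coeff_zero_eq_zero_of_isNilpotent_mk ⟨r + 1, h.pow_succ_eq_zero h0 (hk0.trans_le hk)⟩
  rw [h.eq_pow h0 hk, rowPoly_eq_C_add_sum_Icc, T_one_zero, map_zero, zero_add]

theorem statement4_general {n : Type*} [Fintype n] [Nontrivial n] [NoZeroDivisors K] (r : ℕ)
    (T : ℕ → ℕ → K) (hT : ¬ ∀ k ≤ r, ∀ j ≤ r, T k j = 0) :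
    (∀ A B : Matrix n n K, ∀ k ≤ r, ∀ l ≤ r,
        (k + l ≤ r → ⁅takiffMap r (T k) A, takiffMap r (T l) B⁆ = takiffMap r (T (k + l)) ⁅A, B⁆) ∧
        (r < k + l → ⁅takiffMap r (T k) A, takiffMap r (T l) B⁆ = 0))
      ↔ (∀ k ≤ r, ∀ j ≤ r, T k j =
          ((∑ l ∈ Finset.Icc 1 r, C (T 1 l) * X ^ l) ^ k).coeff j) := by
  simp only [takiffMap_eq_smul_map]
  rw [forall_lie_smul_map_iff_truncatedMultiplicative (algebraMap K (TruncatedPolynomial K r)) r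
      fun k ↦ mk r (rowPoly r (T k)),
    truncatedMultiplicative_mk_rowPoly_iff hT]
  simp only [← map_pow, mk_rowPoly_eq_mk_iff]

end TakiffMap

/-- the linear substitution `B_k = Σ_j T_{kj} A_j` preserves the graded Takiff
bracket relations (⁅B_k(X), B_l(Y)⁆ = B_{k+l}(⁅X,Y⁆) for k+l ≤ r and = 0 for k+l > r, where
the bracket is the matrix commutator over `ℂ[z]/(z^{r+1})`) if and only if, setting
`t_j := T_{1j}`, each `T_{kj}` is the coefficient of `ε^j` in `(Σ_{l=1}^r t_l ε^l)^k`. -/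
theorem statement4 (m r : ℕ) (hm : 2 ≤ m) (hr : 1 ≤ r) (T : ℕ → ℕ → ℂ)
    (hT : ¬ ∀ k ≤ r, ∀ j ≤ r, T k j = 0) :
    (∀ X Y : Matrix (Fin m) (Fin m) ℂ, ∀ k ≤ r, ∀ l ≤ r,
        (k + l ≤ r → ⁅Bmap m r T k X, Bmap m r T l Y⁆ = Bmap m r T (k + l) ⁅X, Y⁆) ∧
        (r < k + l → ⁅Bmap m r T k X, Bmap m r T l Y⁆ = 0))
      ↔ (∀ k ≤ r, ∀ j ≤ r, T k j =
          ((∑ l ∈ Finset.Icc 1 r, Polynomial.C (T 1 l) * Polynomial.X ^ l) ^ k).coeff j) := by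
  have : Nontrivial (Fin m) := Fin.nontrivial_iff_two_le.2 hm
  exact statement4_general r T hT
end

section
/- Let m ≥ 1, r ≥ 1, u ∈ ℂ, and t_1, …, t_r ∈ ℂ. Let W^{[j]} ∈ Mat_m(ℂ) for −r ≤ j ≤ 0 and A^{[k,0]} ∈ Mat_m(ℂ) for 0 ≤ k ≤ r−1 be fixed, and let C, A_0, …, A_{r−1} : ℂ∖{0} → Mat_m(ℂ) be functions such that, as ε → 0 (ε ≠ 0): C(ε) − Σ_{j=−r}^{0} W^{[j]} ε^j → 0, and A_k(ε) + Σ_{l=1}^{r−k} W^{[−k−l]} ε^{−l} − A^{[k,0]} → 0 for each 0 ≤ k ≤ r−1. Define v(ε) := u + Σ_{j=1}^{r} t_j ε^j, and B_i(ε) := Σ_{j=i}^{r−1} A_j(ε)·M^{(r−1)}_{i,j}(t_1,…,t_{r−1}) for 0 ≤ i ≤ r−1 (for r = 1 read B_0(ε) := A_0(ε)). Then for every λ ∈ ℂ with λ ≠ u, the limit as ε → 0 (ε ≠ 0) of Σ_{i=0}^{r−1} B_i(ε)/(λ−u)^{i+1} + C(ε)/(λ−v(ε)) exists and equals Σ_{i=0}^{r}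 B̃_i/(λ−u)^{i+1}, where B̃_i := Σ_{k=i}^{r} Ã_k · M^{(r)}_{i,k}(t_1,…,t_r), with Ã_k := W^{[−k]} + A^{[k,0]} for 0 ≤ k ≤ r−1 and Ã_r := W^{[−r]}. -/
/-!
The inductive confluence step (Theorem 4 / `sect4:small_theorem` of the paper): a simple
pole at `v(ε) = u + Σ t_j ε^j` collides with a pole of Poincaré rank `r−1` at `u`,
producing in the limit `ε → 0` a pole of Poincaré rank `r` at `u` whose coefficients carry
`t_1, …, t_r` through the polynomials `M^{(r)}_{i,k}`.

Here `W k` stands for the Laurent coefficient `W^{[−k]}` of `C(ε)` (`0 ≤ k ≤ r`) and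
`A0 k` stands for `A^{[k,0]}`.
-/

open Filter

noncomputable section

/-- `M^{(r)}_{i,k}(t)` is the coefficient of `ε^k` in `(Σ_{l=1}^r t_l ε^l)^i`
(with `M^{(0)}_{0,0} = 1`). -/
def Mco (r : ℕ) (t : ℕ → ℂ) (i k : ℕ) : ℂ :=
  ((∑ l ∈ Finset.Icc 1 r, Polynomial.C (t l) * Polynomial.X ^ l) ^ i).coeff k

end

/-!
Write `x = λ - u` and expand `1 / (x - P_r(t, ε)) = ∑ c_k ε^k`; by the geometric series
`c_k = ∑_{i ≤ k} M^{(r)}_{i,k} / x^{i+1}`. Exchanging the summations turns the pole at `u` into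
`∑_{k < r} c_k A_k(ε)`, because `M^{(r-1)}_{i,k} = M^{(r)}_{i,k}` for `k < r`, and turns the claimed
limit into `∑_{k ≤ r} c_k Ã_k`. In `C(ε) / (x - P_r(t, ε))` the polar term `ε^{-k} W^{[-k]}` is
multiplied by the expansion, so that the terms `c_j ε^{j-k}` with `j < k` cancel against the polar
part of `∑_{j < r} c_j A_j(ε)`, the term `j = k` contributes `c_k W^{[-k]}`, and the rest vanishes.
-/

section Confluence

open Finset Polynomial Asymptotics
open scoped Topology

section TruncatedPolynomials

variable {R : Type*} [CommRing R] {p q : R[X]} {i k n : ℕ}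

theorem coeff_pow_eq_zero_of_X_dvd (hp : X ∣ p) (hki : k < i) : (p ^ i).coeff k = 0 :=
  X_pow_dvd_iff.mp (pow_dvd_pow_of_dvd hp i) k hki

theorem coeff_pow_eq_of_X_pow_dvd_sub (hpq : X ^ n ∣ p - q) (hk : k < n) :
    (p ^ i).coeff k = (q ^ i).coeff k := by
  have hcoeff := X_pow_dvd_iff.mp (hpq.trans (sub_dvd_pow_sub_pow p q i)) k hk
  rwa [coeff_sub, sub_eq_zero] at hcoeff

theorem X_pow_dvd_sub_sum_coeff (p : R[X]) (n : ℕ) :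
    X ^ n ∣ p - ∑ j ∈ range n, C (p.coeff j) * X ^ j := by
  refine X_pow_dvd_iff.mpr fun d hd => ?_
  simp [finsetSum_coeff, coeff_X_pow, hd]

end TruncatedPolynomials

section ResolventExpansion

variable {K : Type*} [Field K]

/-- The `k`-th Taylor coefficient at `ε = 0` of `1 / (x - p(ε))`, for a polynomial `p` without
constant term; only the terms `i ≤ k` of the geometric series `∑ p ^ i / x ^ (i + 1)` reach
order `k`. -/
noncomputable def resolventCoeff (p : K[X]) (x : K) (k : ℕ) : K :=
  ∑ i ∈ range (k + 1), (x ^ (i + 1))⁻¹ * (p ^ i).coeff k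

theorem C_sub_mul_sum_inv_pow (p : K[X]) {x : K} (hx : x ≠ 0) (n : ℕ) :
    (C x - p) * ∑ i ∈ range n, C (x ^ (i + 1))⁻¹ * p ^ i = 1 - C (x ^ n)⁻¹ * p ^ n := by
  induction n with
  | zero => simp
  | succ n ih =>
    have hC : C x * C (x ^ (n + 1))⁻¹ = C (x ^ n)⁻¹ := by
      rw [← C_mul, pow_succ', mul_inv, mul_inv_cancel_left₀ hx]
    rw [sum_range_succ, mul_add, ih]
    linear_combination p ^ n * hC

theorem coeff_sum_inv_pow {p : K[X]} (hp : X ∣ p) (x : K) {k n : ℕ} (hk : k < n) :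
    (∑ i ∈ range n, C (x ^ (i + 1))⁻¹ * p ^ i).coeff k = resolventCoeff p x k := by
  simp only [finsetSum_coeff, coeff_C_mul]
  refine (sum_subset (range_subset_range.mpr hk) fun i _ hi => ?_).symm
  rw [coeff_pow_eq_zero_of_X_dvd hp (by simpa [Nat.succ_le_iff] using hi), mul_zero]

theorem X_pow_dvd_one_sub_C_sub_mul {p : K[X]} (hp : X ∣ p) {x : K} (hx : x ≠ 0) (n : ℕ) :
    X ^ n ∣ 1 - (C x - p) * ∑ j ∈ range n, C (resolventCoeff p x j) * X ^ j := by
  set S : K[X] := ∑ i ∈ range n, C (x ^ (i + 1))⁻¹ * p ^ i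
  set T : K[X] := ∑ j ∈ range n, C (resolventCoeff p x j) * X ^ j
  have hT : ∑ j ∈ range n, C (S.coeff j) * X ^ j = T :=
    sum_congr rfl fun j hj => by rw [coeff_sum_inv_pow hp x (mem_range.mp hj)]
  have hsplit : 1 - (C x - p) * T = C (x ^ n)⁻¹ * p ^ n + (C x - p) * (S - T) := by
    linear_combination -C_sub_mul_sum_inv_pow p hx n
  rw [hsplit]
  exact dvd_add ((pow_dvd_pow_of_dvd hp n).mul_left _)
    ((hT ▸ X_pow_dvd_sub_sum_coeff S n).mul_left _)

end ResolventExpansion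

section Asymptotics

variable {𝕜 : Type*} [NormedField 𝕜]

theorem isBigO_eval_of_X_pow_dvd {p : 𝕜[X]} {n : ℕ} (hp : X ^ n ∣ p) :
    (fun ε => p.eval ε) =O[𝓝 0] fun ε => ε ^ n := by
  obtain ⟨q, rfl⟩ := hp
  simpa using (isBigO_refl (fun ε : 𝕜 => ε ^ n) (𝓝 0)).mul (q.continuousAt.isBigO_one 𝕜)

theorem isBigO_inv_eval_sub_eval {p q : 𝕜[X]} (hp : p.eval 0 ≠ 0) {n : ℕ}
    (hpq : X ^ n ∣ 1 - p * q) :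
    (fun ε => (p.eval ε)⁻¹ - q.eval ε) =O[𝓝 0] fun ε => ε ^ n := by
  have hbounded : (fun ε => (p.eval ε)⁻¹) =O[𝓝 0] fun _ => (1 : 𝕜) :=
    (p.continuousAt.inv₀ hp).isBigO_one 𝕜
  have hprod := hbounded.mul (isBigO_eval_of_X_pow_dvd hpq)
  simp only [one_mul] at hprod
  refine hprod.congr' ?_ .rfl
  filter_upwards [p.continuousAt.eventually_ne hp] with ε hε
  simp only [eval_sub, eval_one, eval_mul]
  field_simp

theorem isBigO_inv_sub_eval_sub_sum {p : 𝕜[X]} (hp : X ∣ p) {x : 𝕜} (hx : x ≠ 0) (n : ℕ) :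
    (fun ε => (x - p.eval ε)⁻¹ - ∑ j ∈ range n, resolventCoeff p x j * ε ^ j)
      =O[𝓝 0] fun ε => ε ^ n := by
  have hp0 : p.eval 0 = 0 := by rwa [← coeff_zero_eq_eval_zero, ← X_dvd_iff]
  simpa [eval_finsetSum] using
    isBigO_inv_eval_sub_eval (by simpa [hp0] using hx) (X_pow_dvd_one_sub_C_sub_mul hp hx n)

theorem isLittleO_inv_sub_eval_sub_sum {p : 𝕜[X]} (hp : X ∣ p) {x : 𝕜} (hx : x ≠ 0) (n : ℕ) :
    (fun ε => (x - p.eval ε)⁻¹ - ∑ j ∈ range (n + 1), resolventCoeff p x j * ε ^ j)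
      =o[𝓝 0] fun ε => ε ^ n :=
  (isBigO_inv_sub_eval_sub_sum hp hx (n + 1)).trans_isLittleO (isLittleO_pow_pow n.lt_succ_self)

theorem tendsto_sub_sum_mul_inv_pow {f : 𝕜 → 𝕜} {c : ℕ → 𝕜} {k : ℕ}
    (hf : (fun ε => f ε - ∑ j ∈ range (k + 1), c j * ε ^ j) =o[𝓝[≠] 0] fun ε => ε ^ k) :
    Tendsto (fun ε => (f ε - ∑ j ∈ range k, c j * ε ^ j) * (ε ^ k)⁻¹) (𝓝[≠] 0) (𝓝 (c k)) := by
  have hlim := hf.tendsto_div_nhds_zero.add_const (c k)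
  rw [zero_add] at hlim
  refine hlim.congr' ?_
  filter_upwards [self_mem_nhdsWithin] with ε hε
  have hεk : ε ^ k ≠ 0 := pow_ne_zero k hε
  rw [sum_range_succ]
  field_simp
  ring

end Asymptotics

section Cancellation

theorem sum_range_smul_sum_Icc {R E : Type*} [Semiring R] [AddCommMonoid E] [Module R E]
    (n : ℕ) (a : ℕ → R) (b : ℕ → ℕ → R) (F : ℕ → E) :
    ∑ i ∈ range n, a i • ∑ k ∈ Icc i (n - 1), b i k • F k
      = ∑ k ∈ range n, (∑ i ∈ range (k + 1), a i * b i k) • F k := by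
  simp only [smul_sum, smul_smul, sum_smul]
  refine sum_comm' fun i k => ?_
  simp only [mem_range, mem_Icc]
  omega

theorem sum_smul_sum_inv_pow_smul {K E : Type*} [Field K] [AddCommMonoid E] [Module K E]
    (r : ℕ) (c : ℕ → K) (W : ℕ → E) {ε : K} (hε : ε ≠ 0) :
    ∑ j ∈ range r, c j • ∑ l ∈ Icc 1 (r - j), (ε ^ l)⁻¹ • W (j + l)
      = ∑ k ∈ range (r + 1), ((∑ j ∈ range k, c j * ε ^ j) * (ε ^ k)⁻¹) • W k := by
  have hshift (j : ℕ) (hj : j ∈ range r) :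
      c j • ∑ l ∈ Icc 1 (r - j), (ε ^ l)⁻¹ • W (j + l)
        = ∑ k ∈ Ico (j + 1) (r + 1), (c j * ε ^ j * (ε ^ k)⁻¹) • W k := by
    have hjr : r - j + 1 + j = r + 1 := by have := mem_range.mp hj; omega
    rw [← hjr, add_comm j 1, ← sum_Ico_add, ← Ico_add_one_right_eq_Icc, smul_sum]
    refine sum_congr rfl fun l _ => ?_
    rw [smul_smul, pow_add, mul_inv, mul_assoc, mul_inv_cancel_left₀ (pow_ne_zero j hε)]
  simp only [sum_mul, sum_smul]
  rw [sum_congr rfl hshift]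
  refine sum_comm' fun j k => ?_
  simp only [mem_range, mem_Ico]
  omega

theorem tendsto_sum_smul_add_smul {𝕜 E : Type*} [NormedField 𝕜] [AddCommGroup E] [Module 𝕜 E]
    [TopologicalSpace E] [ContinuousAdd E] [ContinuousSMul 𝕜 E] {r : ℕ} {f : 𝕜 → 𝕜} {c : ℕ → 𝕜}
    {W A0 : ℕ → E} {C : 𝕜 → E} {A : ℕ → 𝕜 → E}
    (hf : ∀ k ≤ r,
      (fun ε => f ε - ∑ j ∈ range (k + 1), c j * ε ^ j) =o[𝓝[≠] 0] fun ε => ε ^ k)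
    (hC : Tendsto (fun ε => C ε - ∑ k ∈ range (r + 1), (ε ^ k)⁻¹ • W k) (𝓝[≠] 0) (𝓝 0))
    (hA : ∀ k < r, Tendsto (fun ε => A k ε + ∑ l ∈ Icc 1 (r - k), (ε ^ l)⁻¹ • W (k + l))
      (𝓝[≠] 0) (𝓝 (A0 k))) :
    Tendsto (fun ε => ∑ k ∈ range r, c k • A k ε + f ε • C ε) (𝓝[≠] 0)
      (𝓝 (∑ k ∈ range r, c k • A0 k + ∑ k ∈ range (r + 1), c k • W k)) := by
  have hf0 : Tendsto f (𝓝[≠] 0) (𝓝 (c 0)) := by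
    simpa using tendsto_sub_sum_mul_inv_pow (hf 0 r.zero_le)
  have hremainder : Tendsto
      (fun ε => ∑ k ∈ range (r + 1), ((f ε - ∑ j ∈ range k, c j * ε ^ j) * (ε ^ k)⁻¹) • W k)
      (𝓝[≠] 0) (𝓝 (∑ k ∈ range (r + 1), c k • W k)) :=
    tendsto_finsetSum _ fun k hk =>
      (tendsto_sub_sum_mul_inv_pow (hf k (mem_range_succ_iff.mp hk))).smul_const (W k)
  have hregular := tendsto_finsetSum (range r) fun k hk =>
    (hA k (mem_range.mp hk)).const_smul (c k)
  have hlim := (hregular.add (hf0.smul hC)).add hremainder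
  rw [smul_zero, add_zero] at hlim
  refine hlim.congr' ?_
  filter_upwards [self_mem_nhdsWithin] with ε hε
  simp only [smul_add, sum_add_distrib, sum_smul_sum_inv_pow_smul r c W hε]
  simp only [smul_sub, smul_sum, smul_smul, sub_mul, sub_smul, sum_sub_distrib]
  abel

end Cancellation

section DeformationPolynomial

variable (t : ℕ → ℂ)

/-- The polynomial `P_r(t, ε) = ∑_{l=1}^r t_l ε^l`, the displacement `v(ε) - u` of the moving pole;
`Mco r t i k` is by definition the `k`-th coefficient of its `i`-th power. -/
noncomputable def deformationPolynomial (r : ℕ) : ℂ[X] :=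
  ∑ l ∈ Icc 1 r, C (t l) * X ^ l

theorem coeff_deformationPolynomial (r k : ℕ) :
    (deformationPolynomial t r).coeff k = if k ∈ Icc 1 r then t k else 0 := by
  simp [deformationPolynomial, finsetSum_coeff, coeff_X_pow]

theorem X_dvd_deformationPolynomial (r : ℕ) : X ∣ deformationPolynomial t r :=
  X_dvd_iff.mpr (by simp [coeff_deformationPolynomial])

theorem eval_deformationPolynomial (r : ℕ) (ε : ℂ) :
    (deformationPolynomial t r).eval ε = ∑ l ∈ Icc 1 r, t l * ε ^ l := by
  simp [deformationPolynomial, eval_finsetSum]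

theorem Mco_eq_Mco_of_le {s r k : ℕ} (hks : k ≤ s) (hsr : s ≤ r) (i : ℕ) :
    Mco s t i k = Mco r t i k := by
  refine coeff_pow_eq_of_X_pow_dvd_sub (n := s + 1) (X_pow_dvd_iff.mpr fun d hd => ?_) (by omega)
  change (deformationPolynomial t s - deformationPolynomial t r).coeff d = 0
  have hmem : d ∈ Icc 1 s ↔ d ∈ Icc 1 r := by simp only [mem_Icc]; omega
  simp only [coeff_sub, coeff_deformationPolynomial, hmem, sub_self]

theorem sum_inv_pow_smul_sum_Mco_smul {E : Type*} [AddCommMonoid E] [Module ℂ E] {r n s : ℕ}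
    (hns : n - 1 ≤ s) (hsr : s ≤ r) (x : ℂ) (F : ℕ → E) :
    ∑ i ∈ range n, (x ^ (i + 1))⁻¹ • ∑ k ∈ Icc i (n - 1), Mco s t i k • F k
      = ∑ k ∈ range n, resolventCoeff (deformationPolynomial t r) x k • F k := by
  rw [sum_range_smul_sum_Icc]
  refine sum_congr rfl fun k hk => congrArg (· • F k) (sum_congr rfl fun i _ => ?_)
  have hks : k ≤ s := by have := mem_range.mp hk; omega
  rw [Mco_eq_Mco_of_le t hks hsr i]
  rfl

end DeformationPolynomial

theorem statement9_general {E : Type*} [AddCommGroup E] [Module ℂ E] [TopologicalSpace E]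
    [ContinuousAdd E] [ContinuousSMul ℂ E] (r : ℕ) (u : ℂ) (t : ℕ → ℂ) (W A0 : ℕ → E) (C : ℂ → E)
    (A : ℕ → ℂ → E)
    (hC : Tendsto (fun ε => C ε - ∑ k ∈ range (r + 1), (ε ^ k)⁻¹ • W k) (𝓝[≠] 0) (𝓝 0))
    (hA : ∀ k < r, Tendsto
      (fun ε => A k ε + (∑ l ∈ Icc 1 (r - k), (ε ^ l)⁻¹ • W (k + l)) - A0 k) (𝓝[≠] 0) (𝓝 0))
    (lam : ℂ) (hlam : lam ≠ u) :
    Tendsto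
      (fun ε => (∑ i ∈ range r, ((lam - u) ^ (i + 1))⁻¹ •
            ∑ j ∈ Icc i (r - 1), Mco (r - 1) t i j • A j ε)
          + (lam - (u + ∑ j ∈ Icc 1 r, t j * ε ^ j))⁻¹ • C ε)
      (𝓝[≠] 0)
      (𝓝 (∑ i ∈ range (r + 1), ((lam - u) ^ (i + 1))⁻¹ •
        ∑ k ∈ Icc i r, Mco r t i k • (if k < r then W k + A0 k else W r))) := by
  set c := resolventCoeff (deformationPolynomial t r) (lam - u) with hc
  have hexpansion := isLittleO_inv_sub_eval_sub_sum (X_dvd_deformationPolynomial t r)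
    (sub_ne_zero.mpr hlam)
  have hregular (k : ℕ) (hk : k < r) : Tendsto
      (fun ε => A k ε + ∑ l ∈ Icc 1 (r - k), (ε ^ l)⁻¹ • W (k + l)) (𝓝[≠] 0) (𝓝 (A0 k)) := by
    simpa using (hA k hk).add_const (A0 k)
  have hlimit : ∑ k ∈ range r, c k • A0 k + ∑ k ∈ range (r + 1), c k • W k
      = ∑ k ∈ range (r + 1), c k • (if k < r then W k + A0 k else W r) := by
    have hterm (k : ℕ) (hk : k ∈ range r) :
        c k • (if k < r then W k + A0 k else W r) = c k • A0 k + c k • W k := by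
      rw [if_pos (mem_range.mp hk), smul_add, add_comm]
    rw [sum_range_succ, sum_range_succ, sum_congr rfl hterm, sum_add_distrib, if_neg r.lt_irrefl,
      add_assoc]
  have hpole := sum_inv_pow_smul_sum_Mco_smul (E := E) t (le_refl (r - 1)) (r.sub_le 1) (lam - u)
  have htarget := sum_inv_pow_smul_sum_Mco_smul (E := E) t (n := r + 1) le_rfl le_rfl (lam - u)
  simp only [Nat.add_sub_cancel] at htarget
  simp only [hpole, htarget, ← hc, ← hlimit, ← sub_sub, ← eval_deformationPolynomial]
  exact tendsto_sum_smul_add_smul (fun k _ => (hexpansion k).mono nhdsWithin_le_nhds) hC hregular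

end Confluence

/-- assume `C(ε) − Σ_{k=0}^{r} ε^{−k} W^{[−k]} → 0` and, for `0 ≤ k ≤ r−1`,
`A_k(ε) + Σ_{l=1}^{r−k} ε^{−l} W^{[−k−l]} − A^{[k,0]} → 0` as `ε → 0` (ε ≠ 0).  Put
`v(ε) = u + Σ_{j=1}^{r} t_j ε^j` and `B_i(ε) = Σ_{j=i}^{r−1} M^{(r−1)}_{i,j}(t)·A_j(ε)`.
Then for `λ ≠ u`,
`Σ_{i=0}^{r−1} B_i(ε)/(λ−u)^{i+1} + C(ε)/(λ−v(ε))` converges, as `ε → 0` (ε ≠ 0), to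
`Σ_{i=0}^{r} B̃_i/(λ−u)^{i+1}` with `B̃_i = Σ_{k=i}^{r} M^{(r)}_{i,k}(t)·Ã_k`, where
`Ã_k = W^{[−k]} + A^{[k,0]}` for `k < r` and `Ã_r = W^{[−r]}`. -/
theorem statement9 (m r : ℕ) (hm : 1 ≤ m) (hr : 1 ≤ r) (u : ℂ) (t : ℕ → ℂ)
    (W A0 : ℕ → Matrix (Fin m) (Fin m) ℂ)
    (C : ℂ → Matrix (Fin m) (Fin m) ℂ)
    (A : ℕ → ℂ → Matrix (Fin m) (Fin m) ℂ)
    (hC : Tendsto (fun ε : ℂ => C ε - ∑ k ∈ Finset.range (r + 1), (ε ^ k)⁻¹ • W k)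
      (nhdsWithin 0 {(0 : ℂ)}ᶜ) (nhds 0))
    (hA : ∀ k ≤ r - 1, Tendsto
      (fun ε : ℂ => A k ε + (∑ l ∈ Finset.Icc 1 (r - k), (ε ^ l)⁻¹ • W (k + l)) - A0 k)
      (nhdsWithin 0 {(0 : ℂ)}ᶜ) (nhds 0)) :
    ∀ lam : ℂ, lam ≠ u →
      Tendsto
        (fun ε : ℂ =>
          (∑ i ∈ Finset.range r, ((lam - u) ^ (i + 1))⁻¹ •
              ∑ j ∈ Finset.Icc i (r - 1), Mco (r - 1) t i j • A j ε)
            + (lam - (u + ∑ j ∈ Finset.Icc 1 r, t j * ε ^ j))⁻¹ • C ε)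
        (nhdsWithin 0 {(0 : ℂ)}ᶜ)
        (nhds (∑ i ∈ Finset.range (r + 1), ((lam - u) ^ (i + 1))⁻¹ •
            ∑ k ∈ Finset.Icc i r, Mco r t i k • (if k < r then W k + A0 k else W r))) := by
  intro lam hlam
  exact statement9_general r u t W A0 C A hC (fun k hk => hA k (Nat.le_sub_one_of_lt hk)) lam hlam
end

section
/- Let g and L be Lie algebras over ℂ. Let A_1 ∈ Hom_ℂ(g, L), and let (C_j)_{j ≥ −1} and (B_j)_{j ≥ −1} be families of ℂ-linear maps g → L, all but finitely many zero, with C_{−1} = A_1 and B_{−1} = −A_1. For ε ≠ 0 set C(ε) := Σ_{j ≥ −1} ε^j C_j and B(ε) := Σ_{j ≥ −1} ε^j B_j. Assume that for every ε ∈ ℂ∖{0} and all X, Y ∈ g: ⁅C(ε)(X), C(ε)(Y)⁆ = −C(ε)(⁅X,Y⁆), ⁅B(ε)(X), B(ε)(Y)⁆ = −B(ε)(⁅X,Y⁆), and ⁅C(ε)(X), B(ε)(Y)⁆ = 0. Set A_0 := C_0 + B_0. Then for all X, Y ∈ g: ⁅A_1(X), A_1(Y)⁆ = 0, ⁅A_1(X),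 A_0(Y)⁆ = −A_1(⁅X,Y⁆), and ⁅A_0(X), A_0(Y)⁆ = −A_0(⁅X,Y⁆). (Hence the 1+1 confluence of two simple poles turns two commuting copies of the Lie–Poisson relations of g into the Lie–Poisson relations of the degree-1 Takiff algebra of g.) -/
/-!
The 1+1 confluence at the level of Poisson (Lie–Poisson) relations: two commuting copies
of the Lie–Poisson relations of `g` produce, in the limit, the Lie–Poisson relations of
the degree-1 Takiff algebra of `g`.

A family `(C_j)_{j ≥ −1}` of linear maps `g → L`, all but finitely many zero, with
`C_{−1} = A₁`, is encoded by `A₁` together with the finitely supported family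
`(Cm j)_{j ∈ ℕ}` of the nonnegative-index coefficients; its value at `ε ≠ 0` is
`serLaurent A₁ Cm ε = ε⁻¹ • A₁ + Σ_j ε^j • Cm j`.  The family `B` with `B_{−1} = −A₁`
is then `serLaurent (−A₁) Bm`.
-/

noncomputable section

/-- `serLaurent A₁ Cm ε X = ε⁻¹ • A₁(X) + Σᶠ_{j∈ℕ} ε^j • (Cm j)(X)`. -/
def serLaurent {g L : Type*} [LieRing g] [LieAlgebra ℂ g] [LieRing L] [LieAlgebra ℂ L]
    (A₁ : g →ₗ[ℂ] L) (Cm : ℕ → (g →ₗ[ℂ] L)) (ε : ℂ) (X : g) : L :=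
  ε⁻¹ • A₁ X + ∑ᶠ j : ℕ, ε ^ j • Cm j X

end

/-!
Two polynomial maps from a field to a vector space that agree infinitely often are equal, so an
identity between them that holds for infinitely many `ε ≠ 0` may be evaluated at `ε = 0`.

The poles of the two families cancel in `D(ε) = C(ε) + B(ε)`, which is therefore polynomial with
`D(0) = A₀`. Since `C` and `B` commute, `⁅C(ε)X, D(ε)Y⁆ = -C(ε)⁅X, Y⁆` and
`⁅D(ε)X, D(ε)Y⁆ = -D(ε)⁅X, Y⁆`. Multiply the first of these by `ε`, and the relation for
`⁅C(ε)X, C(ε)Y⁆` by `ε ^ 2`, to clear the poles; at `ε = 0` the three identities become the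
Takiff relations.
-/

/-- The polynomial maps `ε ↦ ∑ j, ε ^ j • a j` from `K` to a `K`-module `M`, as the span of the
monomial ones: the maps whose values at `0` are determined by their values at any infinite set of
`ε ≠ 0`, when `K` is a field. -/
def polynomialMaps (K M : Type*) [CommSemiring K] [AddCommMonoid M] [Module K M] :
    Submodule K (K → M) :=
  Submodule.span K {f | ∃ (n : ℕ) (a : M), f = fun ε => ε ^ n • a}

namespace polynomialMaps

section CommSemiring

variable {K M N P : Type*} [CommSemiring K] [AddCommMonoid M] [Module K M]
  [AddCommMonoid N] [Module K N] [AddCommMonoid P] [Module K P]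

theorem pow_smul_mem (n : ℕ) (a : M) : (fun ε : K => ε ^ n • a) ∈ polynomialMaps K M :=
  Submodule.subset_span ⟨n, a, rfl⟩

theorem const_mem (a : M) : (fun _ : K => a) ∈ polynomialMaps K M := by
  simpa only [pow_zero, one_smul] using pow_smul_mem (K := K) 0 a

theorem finsum_pow_smul_mem {a : ℕ → M} (ha : (Function.support a).Finite) :
    (fun ε : K => ∑ᶠ j, ε ^ j • a j) ∈ polynomialMaps K M := by
  have finsum_eq_sum : (fun ε : K => ∑ᶠ j, ε ^ j • a j) =
      ∑ j ∈ ha.toFinset, fun ε : K => ε ^ j • a j := by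
    ext ε
    rw [Finset.sum_apply]
    refine finsum_eq_sum_of_support_subset _ ?_
    rw [ha.coe_toFinset]
    exact Function.support_smul_subset_right _ a
  rw [finsum_eq_sum]
  exact sum_mem fun j _ => pow_smul_mem j (a j)

theorem finsum_pow_smul_linearMap_mem {F : ℕ → M →ₗ[K] N} (hF : (Function.support F).Finite)
    (v : M) : (fun ε : K => ∑ᶠ j, ε ^ j • F j v) ∈ polynomialMaps K N :=
  finsum_pow_smul_mem <| hF.subset <|
    Function.support_comp_subset (g := fun φ : M →ₗ[K] N => φ v) rfl F

theorem linearMap_comp_mem (φ : M →ₗ[K] N) {f : K → M} (hf : f ∈ polynomialMaps K M) :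
    (fun ε => φ (f ε)) ∈ polynomialMaps K N := by
  have le_comap : polynomialMaps K M ≤ (polynomialMaps K N).comap (φ.compLeft K) := by
    refine Submodule.span_le.mpr ?_
    rintro _ ⟨n, a, rfl⟩
    have comp_eq : φ.compLeft K (fun ε => ε ^ n • a) = fun ε => ε ^ n • φ a :=
      funext fun ε => map_smul φ (ε ^ n) a
    rw [SetLike.mem_coe, Submodule.mem_comap, comp_eq]
    exact pow_smul_mem n (φ a)
  exact le_comap hf

theorem apply_apply_mem (B : M →ₗ[K] N →ₗ[K] P) {f : K → M} {h : K → N}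
    (hf : f ∈ polynomialMaps K M) (hh : h ∈ polynomialMaps K N) :
    (fun ε => B (f ε) (h ε)) ∈ polynomialMaps K P := by
  induction hf, hh using Submodule.span_induction₂ with
  | mem_mem f h hf hh =>
    obtain ⟨m, a, rfl⟩ := hf
    obtain ⟨n, b, rfl⟩ := hh
    simpa only [map_smul, LinearMap.smul_apply, smul_smul, ← pow_add] using
      pow_smul_mem (n + m) (B a b)
  | zero_left h _ =>
    simp only [Pi.zero_apply, map_zero, LinearMap.zero_apply]
    exact const_mem 0
  | zero_right f _ =>
    simp only [Pi.zero_apply, map_zero]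
    exact const_mem 0
  | add_left f₁ f₂ h _ _ _ ih₁ ih₂ =>
    simp only [Pi.add_apply, map_add, LinearMap.add_apply]
    exact add_mem ih₁ ih₂
  | add_right f h₁ h₂ _ _ _ ih₁ ih₂ =>
    simp only [Pi.add_apply, map_add]
    exact add_mem ih₁ ih₂
  | smul_left r f h _ _ ih =>
    simp only [Pi.smul_apply, map_smul, LinearMap.smul_apply]
    exact Submodule.smul_mem _ r ih
  | smul_right r f h _ _ ih =>
    simp only [Pi.smul_apply, map_smul]
    exact Submodule.smul_mem _ r ih

theorem id_smul_mem {f : K → M} (hf : f ∈ polynomialMaps K M) :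
    (fun ε => ε • f ε) ∈ polynomialMaps K M := by
  have id_mem : (fun ε : K => ε) ∈ polynomialMaps K K := by
    simpa using pow_smul_mem (K := K) 1 (1 : K)
  exact apply_apply_mem (LinearMap.lsmul K M) id_mem hf

theorem const_add_id_smul_mem (a : M) {f : K → M} (hf : f ∈ polynomialMaps K M) :
    (fun ε => a + ε • f ε) ∈ polynomialMaps K M :=
  add_mem (const_mem a) (id_smul_mem hf)

theorem exists_polynomial_eval_eq {f : K → K} (hf : f ∈ polynomialMaps K K) :
    ∃ p : Polynomial K, ∀ ε, p.eval ε = f ε := by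
  induction hf using Submodule.span_induction with
  | mem f hf =>
    obtain ⟨n, a, rfl⟩ := hf
    exact ⟨Polynomial.monomial n a, by simp [mul_comm]⟩
  | zero => exact ⟨0, by simp⟩
  | add f h _ _ ihf ihh =>
    obtain ⟨p, hp⟩ := ihf
    obtain ⟨q, hq⟩ := ihh
    exact ⟨p + q, by simp [hp, hq]⟩
  | smul r f _ ih =>
    obtain ⟨p, hp⟩ := ih
    exact ⟨r • p, by simp [hp]⟩

end CommSemiring

theorem lie_mem {K L M : Type*} [CommRing K] [LieRing L] [LieAlgebra K L] [AddCommGroup M]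
    [Module K M] [LieRingModule L M] [LieModule K L M] {f : K → L} {h : K → M}
    (hf : f ∈ polynomialMaps K L) (hh : h ∈ polynomialMaps K M) :
    (fun ε => ⁅f ε, h ε⁆) ∈ polynomialMaps K M :=
  apply_apply_mem (LieModule.toEnd K L M : L →ₗ[K] Module.End K M) hf hh

theorem eq_of_eqOn_infinite {K V : Type*} [CommRing K] [IsDomain K] [AddCommGroup V]
    [Module K V] [Module.Projective K V] {f h : K → V} (hf : f ∈ polynomialMaps K V)
    (hh : h ∈ polynomialMaps K V) {S : Set K} (hS : S.Infinite) (hfh : Set.EqOn f h S) : f = h := by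
  ext ε
  refine Module.eval_apply_injective K (LinearMap.ext fun φ => ?_)
  simp only [Module.Dual.eval_apply]
  obtain ⟨p, hp⟩ := exists_polynomial_eval_eq (linearMap_comp_mem φ hf)
  obtain ⟨q, hq⟩ := exists_polynomial_eval_eq (linearMap_comp_mem φ hh)
  have hpq : p = q := Polynomial.eq_of_infinite_eval_eq p q <|
    hS.mono fun δ hδ => (hp δ).trans <| (congrArg φ (hfh hδ)).trans (hq δ).symm
  rw [← hp, ← hq, hpq]

end polynomialMaps

theorem finsum_zero_pow_smul {K M : Type*} [Semiring K] [AddCommMonoid M] [Module K M]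
    (a : ℕ → M) : ∑ᶠ j, (0 : K) ^ j • a j = a 0 := by
  rw [finsum_eq_single _ 0 fun j hj => by rw [zero_pow hj, zero_smul], pow_zero, one_smul]

/-- The map `ε ↦ ε⁻¹ • a + c ε` with residue `a` and regular part `c` at its simple pole `0`;
at `ε = 0` itself it has the junk value `c 0`. For fixed `X`, the map `ε ↦ serLaurent A₁ Cm ε X` is
of this form by definition. -/
def simplePole {K V : Type*} [Field K] [AddCommGroup V] [Module K V]
    (a : V) (c : K → V) (ε : K) : V :=
  ε⁻¹ • a + c ε

section Module

variable {K V : Type*} [Field K] [AddCommGroup V] [Module K V]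

theorem smul_simplePole (a : V) (c : K → V) {ε : K} (hε : ε ≠ 0) :
    ε • simplePole a c ε = a + ε • c ε := by
  rw [simplePole, smul_add, smul_inv_smul₀ hε]

theorem neg_simplePole (a : V) (c : K → V) (ε : K) :
    -simplePole a c ε = simplePole (-a) (-c) ε := by
  simp only [simplePole, smul_neg, Pi.neg_apply, neg_add]

theorem simplePole_add_simplePole_neg (a : V) (c b : K → V) (ε : K) :
    simplePole a c ε + simplePole (-a) b ε = c ε + b ε := by
  simp only [simplePole, smul_neg]
  abel

end Module

section Lie

variable {K L M : Type*} [Field K] [LieRing L] [LieAlgebra K L] [AddCommGroup M]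
  [Module K M] [LieRingModule L M] [LieModule K L M] {S : Set K}
  {x : L} {c : K → L} {y z : M} {d e : K → M}

theorem lie_eq_of_lie_simplePole_eq (hS : S.Infinite) (hS₀ : 0 ∉ S)
    (hc : c ∈ polynomialMaps K L) (hd : d ∈ polynomialMaps K M) (he : e ∈ polynomialMaps K M)
    (h : ∀ ε ∈ S, ⁅simplePole x c ε, d ε⁆ = simplePole z e ε) : ⁅x, d 0⁆ = z := by
  have cleared : Set.EqOn (fun ε => ⁅x + ε • c ε, d ε⁆) (fun ε => z + ε • e ε) S := by
    intro ε hε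
    have hε₀ : ε ≠ 0 := ne_of_mem_of_not_mem hε hS₀
    simp only [← smul_simplePole _ _ hε₀, smul_lie, h ε hε]
  simpa using congrFun (polynomialMaps.eq_of_eqOn_infinite
    (polynomialMaps.lie_mem (polynomialMaps.const_add_id_smul_mem x hc) hd)
    (polynomialMaps.const_add_id_smul_mem z he) hS cleared) 0

theorem lie_eq_zero_of_lie_simplePole_simplePole_eq (hS : S.Infinite) (hS₀ : 0 ∉ S)
    (hc : c ∈ polynomialMaps K L) (hd : d ∈ polynomialMaps K M) (he : e ∈ polynomialMaps K M)
    (h : ∀ ε ∈ S, ⁅simplePole x c ε, simplePole y d ε⁆ = simplePole z e ε) : ⁅x, y⁆ = 0 := by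
  have cleared : ∀ ε ∈ S, ⁅simplePole x c ε, y + ε • d ε⁆ =
      simplePole 0 (fun ε => z + ε • e ε) ε := by
    intro ε hε
    have hε₀ : ε ≠ 0 := ne_of_mem_of_not_mem hε hS₀
    rw [← smul_simplePole y d hε₀, lie_smul, h ε hε, smul_simplePole z e hε₀, simplePole, smul_zero,
      zero_add]
  simpa using lie_eq_of_lie_simplePole_eq hS hS₀ hc
    (polynomialMaps.const_add_id_smul_mem y hd) (polynomialMaps.const_add_id_smul_mem z he) cleared

end Lie

theorem statement10_general {K g L : Type*} [Field K] [Bracket g g] [LieRing L] [LieAlgebra K L]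
    {S : Set K} (hS : S.Infinite) (hS₀ : 0 ∉ S) (A₁ : g → L) (c b : g → K → L)
    (hc : ∀ X, c X ∈ polynomialMaps K L) (hb : ∀ X, b X ∈ polynomialMaps K L)
    (hC : ∀ ε ∈ S, ∀ X Y : g, ⁅simplePole (A₁ X) (c X) ε, simplePole (A₁ Y) (c Y) ε⁆ =
      -simplePole (A₁ ⁅X, Y⁆) (c ⁅X, Y⁆) ε)
    (hB : ∀ ε ∈ S, ∀ X Y : g, ⁅simplePole (-A₁ X) (b X) ε, simplePole (-A₁ Y) (b Y) ε⁆ =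
      -simplePole (-A₁ ⁅X, Y⁆) (b ⁅X, Y⁆) ε)
    (hCB : ∀ ε ∈ S, ∀ X Y : g, ⁅simplePole (A₁ X) (c X) ε, simplePole (-A₁ Y) (b Y) ε⁆ = 0)
    (X Y : g) :
    ⁅A₁ X, A₁ Y⁆ = 0 ∧
    ⁅A₁ X, c Y 0 + b Y 0⁆ = -A₁ ⁅X, Y⁆ ∧
    ⁅c X 0 + b X 0, c Y 0 + b Y 0⁆ = -(c ⁅X, Y⁆ 0 + b ⁅X, Y⁆ 0) := by
  have regular_sum_mem (Z : g) : c Z + b Z ∈ polynomialMaps K L := add_mem (hc Z) (hb Z)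
  have lie_C_sum : ∀ ε ∈ S, ⁅simplePole (A₁ X) (c X) ε, (c Y + b Y) ε⁆ =
      simplePole (-A₁ ⁅X, Y⁆) (-c ⁅X, Y⁆) ε := fun ε hε => by
    rw [Pi.add_apply, ← simplePole_add_simplePole_neg (A₁ Y), lie_add, hC ε hε, hCB ε hε, add_zero,
      neg_simplePole]
  have lie_sum_sum : Set.EqOn (fun ε => ⁅(c X + b X) ε, (c Y + b Y) ε⁆)
      (-(c ⁅X, Y⁆ + b ⁅X, Y⁆)) S := fun ε hε => by
    have hBC : ⁅simplePole (-A₁ X) (b X) ε, simplePole (A₁ Y) (c Y) ε⁆ = 0 := by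
      rw [← lie_skew, hCB ε hε, neg_zero]
    calc ⁅c X ε + b X ε, c Y ε + b Y ε⁆
        = ⁅simplePole (A₁ X) (c X) ε + simplePole (-A₁ X) (b X) ε,
            simplePole (A₁ Y) (c Y) ε + simplePole (-A₁ Y) (b Y) ε⁆ := by
          simp only [simplePole_add_simplePole_neg]
      _ = -(simplePole (A₁ ⁅X, Y⁆) (c ⁅X, Y⁆) ε + simplePole (-A₁ ⁅X, Y⁆) (b ⁅X, Y⁆) ε) := by
          rw [add_lie, lie_add, lie_add, hC ε hε, hB ε hε, hCB ε hε, hBC, add_zero, zero_add,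
            neg_add]
      _ = -(c ⁅X, Y⁆ ε + b ⁅X, Y⁆ ε) := by rw [simplePole_add_simplePole_neg]
  exact ⟨lie_eq_zero_of_lie_simplePole_simplePole_eq hS hS₀ (hc X) (hc Y) (neg_mem (hc ⁅X, Y⁆))
      fun ε hε => (hC ε hε X Y).trans (neg_simplePole _ _ ε),
    lie_eq_of_lie_simplePole_eq hS hS₀ (hc X) (regular_sum_mem Y) (neg_mem (hc ⁅X, Y⁆)) lie_C_sum,
    congrFun (polynomialMaps.eq_of_eqOn_infinite
      (polynomialMaps.lie_mem (regular_sum_mem X) (regular_sum_mem Y))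
      (neg_mem (regular_sum_mem ⁅X, Y⁆)) hS lie_sum_sum) 0⟩

/-- if for every `ε ≠ 0` the maps `C(ε) = ε⁻¹A₁ + Σ ε^j C_j` and
`B(ε) = −ε⁻¹A₁ + Σ ε^j B_j` satisfy `⁅C(ε)X, C(ε)Y⁆ = −C(ε)⁅X,Y⁆`,
`⁅B(ε)X, B(ε)Y⁆ = −B(ε)⁅X,Y⁆` and `⁅C(ε)X, B(ε)Y⁆ = 0`, then with `A₀ := C₀ + B₀` one has
`⁅A₁X, A₁Y⁆ = 0`, `⁅A₁X, A₀Y⁆ = −A₁⁅X,Y⁆` and `⁅A₀X, A₀Y⁆ = −A₀⁅X,Y⁆`: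
the degree-1 Takiff Lie–Poisson relations. -/
theorem statement10 {g L : Type*} [LieRing g] [LieAlgebra ℂ g] [LieRing L] [LieAlgebra ℂ L]
    (A₁ : g →ₗ[ℂ] L) (Cm Bm : ℕ → (g →ₗ[ℂ] L))
    (hCm : (Function.support Cm).Finite) (hBm : (Function.support Bm).Finite)
    (hC : ∀ ε : ℂ, ε ≠ 0 → ∀ X Y : g,
      ⁅serLaurent A₁ Cm ε X, serLaurent A₁ Cm ε Y⁆ = - serLaurent A₁ Cm ε ⁅X, Y⁆)
    (hB : ∀ ε : ℂ, ε ≠ 0 → ∀ X Y : g,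
      ⁅serLaurent (-A₁) Bm ε X, serLaurent (-A₁) Bm ε Y⁆ = - serLaurent (-A₁) Bm ε ⁅X, Y⁆)
    (hCB : ∀ ε : ℂ, ε ≠ 0 → ∀ X Y : g,
      ⁅serLaurent A₁ Cm ε X, serLaurent (-A₁) Bm ε Y⁆ = 0) :
    ∀ X Y : g,
      ⁅A₁ X, A₁ Y⁆ = 0 ∧
      ⁅A₁ X, (Cm 0 + Bm 0) Y⁆ = - A₁ ⁅X, Y⁆ ∧
      ⁅(Cm 0 + Bm 0) X, (Cm 0 + Bm 0) Y⁆ = - (Cm 0 + Bm 0) ⁅X, Y⁆ := by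
  simpa only [finsum_zero_pow_smul, LinearMap.add_apply] using statement10_general
    (Set.finite_singleton (0 : ℂ)).infinite_compl (by simp) A₁ _ _
    (polynomialMaps.finsum_pow_smul_linearMap_mem hCm)
    (polynomialMaps.finsum_pow_smul_linearMap_mem hBm) hC hB hCB
end

section
/- Let m ≥ 1 and n ≥ 2, let u_1, …, u_n ∈ ℂ be pairwise distinct, and let (Q_1,P_1), …, (Q_n,P_n) be n pairs of m×m matrices of independent commuting indeterminates. For each i set H_i := Σ_{j ≠ i} Tr(Q_i P_i Q_j P_j)/(u_i − u_j). Then with respect to the canonical Poisson bracket, the lifted Schlesinger Hamiltonians Poisson-commute with the moment maps of the inner group action: {H_i, (P_k Q_k)_{ab}} = 0 for all 1 ≤ i,k ≤ n and all 1 ≤ a,b ≤ m. -/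
/-!
The lifted Schlesinger Hamiltonians Poisson-commute with the moment maps `P_kQ_k` of the
inner group action.
-/

open MvPolynomial

noncomputable section

/-- The lifted Schlesinger Hamiltonian `H_i = Σ_{j≠i} Tr(Q_iP_iQ_jP_j)/(u_i−u_j)`. -/
def Hschles (n m : ℕ) (u : Fin n → ℂ) (i : Fin n) : MvPolynomial (Idx n m) ℂ :=
  ∑ j ∈ Finset.univ.erase i,
    C ((u i - u j)⁻¹) * (Qm n m i * Pm n m i * Qm n m j * Pm n m j).trace

end

/-!
The Hamiltonian vector field `{·, (P_k Q_k)_{ab}}` is a derivation, and it is the infinitesimal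
inner action on the `k`-th pair: with `E = E_{ba}` it sends `Q_k` to `-Q_k E` and `P_k` to
`E P_k`, and it kills all other pairs. By the Leibniz rule it sends `Q_k P_k` to
`-Q_k E P_k + Q_k E P_k = 0`, so it annihilates every product `Q_j P_j`, and with them the trace
of any product of these.
-/

section MatrixDerivation

variable {R A : Type*} [CommSemiring R] [CommSemiring A] [Algebra R A]

theorem derivation_sum_apply {M ι : Type*} [AddCommMonoid M] [Module A M] [Module R M]
    (s : Finset ι) (D : ι → Derivation R A M) (f : A) :
    (∑ x ∈ s, D x) f = ∑ x ∈ s, D x f :=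
  map_sum ((Pi.evalAddMonoidHom _ f).comp Derivation.coeFnAddMonoidHom) D s

theorem matrix_mul_map_derivation {l m n : Type*} [Fintype m] (D : Derivation R A A)
    (M : Matrix l m A) (N : Matrix m n A) :
    (M * N).map D = M.map D * N + M * N.map D := by
  ext x y
  simp only [Matrix.map_apply, Matrix.add_apply, Matrix.mul_apply, map_sum, Derivation.leibniz,
    smul_eq_mul, ← Finset.sum_add_distrib]
  exact Finset.sum_congr rfl fun z _ => by ring

end MatrixDerivation

section PoissonBracket

variable {N m : ℕ}

/-- The Hamiltonian vector field `f ↦ {f, g}` of `g`, as a derivation of the polynomial ring. -/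
noncomputable def hamiltonianDerivation (g : MvPolynomial (Idx N m) ℂ) :
    Derivation ℂ (MvPolynomial (Idx N m) ℂ) (MvPolynomial (Idx N m) ℂ) :=
  ∑ α : Fin N, ∑ i : Fin m, ∑ j : Fin m,
    (pderiv (α, false, j, i) g • pderiv (α, true, i, j)
      - pderiv (α, true, i, j) g • pderiv (α, false, j, i))

theorem hamiltonianDerivation_apply (f g : MvPolynomial (Idx N m) ℂ) :
    hamiltonianDerivation g f = pois f g := by
  simp only [hamiltonianDerivation, pois, derivation_sum_apply, Derivation.sub_apply,
    Derivation.smul_apply, smul_eq_mul, mul_comm (pderiv (_, false, _, _) g)]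

theorem pois_Pm_apply (g : MvPolynomial (Idx N m) ℂ) (β : Fin N) (x y : Fin m) :
    pois (Pm N m β x y) g = pderiv (β, false, y, x) g := by
  rw [pois, Finset.sum_eq_single β, Finset.sum_eq_single x, Finset.sum_eq_single y]
  all_goals simp +contextual [Pm, pderiv_X, Pi.single_apply, eq_comm]

theorem pois_Qm_apply (g : MvPolynomial (Idx N m) ℂ) (β : Fin N) (x y : Fin m) :
    pois (Qm N m β x y) g = -pderiv (β, true, y, x) g := by
  rw [pois, Finset.sum_eq_single β, Finset.sum_eq_single y, Finset.sum_eq_single x]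
  all_goals simp +contextual [Qm, pderiv_X, Pi.single_apply, eq_comm]

end PoissonBracket

section InnerAction

variable {N m : ℕ}

/-- The element of the inner Lie algebra `𝔤𝔩_m ⊕ ⋯ ⊕ 𝔤𝔩_m` (one summand for each pair) whose `k`-th
component is the matrix unit `E_{ab}` and whose other components vanish. Its entries are taken in
the polynomial ring so that it can be multiplied with the `Q_α` and `P_α`. -/
noncomputable def matrixUnitAt (k : Fin N) (a b : Fin m) :
    Fin N → Matrix (Fin m) (Fin m) (MvPolynomial (Idx N m) ℂ) :=
  Pi.single k (Matrix.single a b 1)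

theorem Pm_map_pderiv_P (α k : Fin N) (i j : Fin m) :
    (Pm N m k).map (pderiv (α, true, i, j)) = matrixUnitAt α i j k := by
  ext1 x y
  obtain rfl | hk := eq_or_ne k α
  · simp [Pm, matrixUnitAt, Matrix.single_apply, pderiv_X, Pi.single_apply, eq_comm]
  · simp [Pm, matrixUnitAt, pderiv_X, hk]

theorem Qm_map_pderiv_Q (α k : Fin N) (i j : Fin m) :
    (Qm N m k).map (pderiv (α, false, i, j)) = matrixUnitAt α i j k := by
  ext1 x y
  obtain rfl | hk := eq_or_ne k α
  · simp [Qm, matrixUnitAt, Matrix.single_apply, pderiv_X, Pi.single_apply, eq_comm]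
  · simp [Qm, matrixUnitAt, pderiv_X, hk]

theorem Pm_map_pderiv_Q (α k : Fin N) (i j : Fin m) :
    (Pm N m k).map (pderiv (α, false, i, j)) = 0 := by
  ext1 x y
  simp [Pm, pderiv_X]

theorem Qm_map_pderiv_P (α k : Fin N) (i j : Fin m) :
    (Qm N m k).map (pderiv (α, true, i, j)) = 0 := by
  ext1 x y
  simp [Qm, pderiv_X]

theorem Pm_mul_Qm_map_pderiv_P (α k : Fin N) (i j : Fin m) :
    (Pm N m k * Qm N m k).map (pderiv (α, true, i, j)) = matrixUnitAt α i j k * Qm N m k := by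
  rw [matrix_mul_map_derivation, Pm_map_pderiv_P, Qm_map_pderiv_P, mul_zero, add_zero]

theorem Pm_mul_Qm_map_pderiv_Q (α k : Fin N) (i j : Fin m) :
    (Pm N m k * Qm N m k).map (pderiv (α, false, i, j)) = Pm N m k * matrixUnitAt α i j k := by
  rw [matrix_mul_map_derivation, Pm_map_pderiv_Q, Qm_map_pderiv_Q, zero_mul, zero_add]

theorem Pm_map_hamiltonianDerivation (k β : Fin N) (a b : Fin m) :
    (Pm N m β).map (hamiltonianDerivation ((Pm N m k * Qm N m k) a b)) =
      matrixUnitAt k b a β * Pm N m β := by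
  ext1 x y
  rw [Matrix.map_apply, hamiltonianDerivation_apply, pois_Pm_apply,
    ← Matrix.map_apply (f := pderiv (β, false, y, x)), Pm_mul_Qm_map_pderiv_Q]
  obtain rfl | hβ := eq_or_ne β k
  · simp [matrixUnitAt, Matrix.mul_apply, Matrix.single_apply, ite_and, eq_comm]
  · simp [matrixUnitAt, hβ, hβ.symm]

theorem Qm_map_hamiltonianDerivation (k β : Fin N) (a b : Fin m) :
    (Qm N m β).map (hamiltonianDerivation ((Pm N m k * Qm N m k) a b)) =
      -(Qm N m β * matrixUnitAt k b a β) := by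
  ext1 x y
  rw [Matrix.map_apply, hamiltonianDerivation_apply, pois_Qm_apply,
    ← Matrix.map_apply (f := pderiv (β, true, y, x)), Pm_mul_Qm_map_pderiv_P]
  obtain rfl | hβ := eq_or_ne β k
  · simp [matrixUnitAt, Matrix.mul_apply, Matrix.single_apply, ite_and, eq_comm]
  · simp [matrixUnitAt, hβ, hβ.symm]

theorem Qm_mul_Pm_map_hamiltonianDerivation (k β : Fin N) (a b : Fin m) :
    (Qm N m β * Pm N m β).map (hamiltonianDerivation ((Pm N m k * Qm N m k) a b)) = 0 := by
  rw [matrix_mul_map_derivation, Qm_map_hamiltonianDerivation, Pm_map_hamiltonianDerivation]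
  noncomm_ring

theorem pois_trace_Qm_Pm_Qm_Pm_eq_zero (i j k : Fin N) (a b : Fin m) :
    pois (Qm N m i * Pm N m i * Qm N m j * Pm N m j).trace ((Pm N m k * Qm N m k) a b) = 0 := by
  rw [← hamiltonianDerivation_apply, AddMonoidHom.map_trace, Matrix.mul_assoc (_ * _),
    matrix_mul_map_derivation, Qm_mul_Pm_map_hamiltonianDerivation,
    Qm_mul_Pm_map_hamiltonianDerivation, zero_mul, mul_zero, add_zero, Matrix.trace_zero]

end InnerAction

/-- the lifted Schlesinger Hamiltonians Poisson-commute with the entries of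
the inner moment maps: `{H_i, (P_kQ_k)_{ab}} = 0`. -/
theorem statement13 (m n : ℕ) (hm : 1 ≤ m) (hn : 2 ≤ n)
    (u : Fin n → ℂ) (hu : Function.Injective u)
    (i k : Fin n) (a b : Fin m) :
    pois (Hschles n m u i) ((Pm n m k * Qm n m k) a b) = 0 := by
  rw [Hschles, ← hamiltonianDerivation_apply, map_sum]
  refine Finset.sum_eq_zero fun j _ => ?_
  rw [← smul_eq_C_mul, Derivation.map_smul, hamiltonianDerivation_apply,
    pois_trace_Qm_Pm_Qm_Pm_eq_zero, smul_zero]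
end

section
/- Let m ≥ 1 and n ≥ 2, let u_1, …, u_n ∈ ℂ be pairwise distinct, and let (Q_1,P_1), …, (Q_n,P_n) be n pairs of m×m matrices of independent commuting indeterminates. For each i set H_i := Σ_{j ≠ i} Tr(Q_i P_i Q_j P_j)/(u_i − u_j). Then with respect to the canonical Poisson bracket the lifted Schlesinger Hamiltonians pairwise Poisson-commute: {H_i, H_j} = 0 for all 1 ≤ i,j ≤ n. -/
/-!
The lifted Schlesinger Hamiltonians pairwise Poisson-commute (involutivity of the lifted Schlesinger/Gaudin Hamiltonians).
-/

open MvPolynomial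

/-!
The lifted variables satisfy the canonical relations `{P_ij, Q_kl} = δ_il δ_jk`, so each entry
`A_ab` of `A = Q P` acts on `Q` and `P` as the elementary matrix `E_ba` does in `𝔤𝔩_m`. Hence
`{A_ab, A} = [E_ba, A]`, while entries of residues at different points commute: the residues
satisfy the Lie–Poisson relations of a sum of copies of `𝔤𝔩_m`. These relations alone give
`{H_i, A_j} = [A_i, A_j] / (u_i - u_j)` for `i ≠ j` (the Schlesinger equations), and then
`{H_i, H_j}` is a sum over `k` of multiples of `Tr([A_i, A_j] A_k)`. For `k ∈ {i, j}` this trace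
vanishes; for the other `k` its coefficient vanishes by partial fractions.
-/

section Matrix

variable {l n p R : Type*} [Fintype n] [CommRing R]

lemma map_derivation_mul {K : Type*} [CommRing K] [Algebra K R]
    (D : Derivation K R R) (M : Matrix l n R) (N : Matrix n p R) :
    (M * N).map D = M.map D * N + M * N.map D := by
  ext i j
  simp only [Matrix.map_apply, Matrix.mul_apply, Matrix.add_apply, map_sum, Derivation.leibniz,
    smul_eq_mul, ← Finset.sum_add_distrib]
  exact Finset.sum_congr rfl fun k _ => by ring

lemma derivation_trace {K : Type*} [CommRing K] [Algebra K R]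
    (D : Derivation K R R) (M : Matrix n n R) : D M.trace = (M.map D).trace :=
  map_sum D _ _

lemma trace_lie_mul (M N L : Matrix n n R) : (⁅M, N⁆ * L).trace = (M * ⁅N, L⁆).trace := by
  simp only [Ring.lie_def, sub_mul, mul_sub, Matrix.trace_sub, ← Matrix.mul_assoc]
  rw [Matrix.trace_mul_cycle N M L, Matrix.trace_mul_cycle L N M]

lemma trace_lie_mul_skew (M N L : Matrix n n R) :
    (⁅N, M⁆ * L).trace = -(⁅M, N⁆ * L).trace := by
  rw [← Matrix.trace_neg, ← neg_mul, Ring.lie_def, Ring.lie_def, neg_sub]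

lemma trace_mul_lie (M N L : Matrix n n R) : (M * ⁅N, L⁆).trace = (⁅L, M⁆ * N).trace := by
  rw [Matrix.trace_mul_comm, trace_lie_mul, Matrix.trace_mul_comm]

lemma trace_lie_mul_self_left (M N : Matrix n n R) : (⁅M, N⁆ * M).trace = 0 := by
  rw [Matrix.trace_mul_comm, ← trace_lie_mul, Ring.lie_def, sub_self, zero_mul, Matrix.trace_zero]

lemma trace_lie_mul_self_right (M N : Matrix n n R) : (⁅M, N⁆ * N).trace = 0 := by
  rw [trace_lie_mul, Ring.lie_def, sub_self, mul_zero, Matrix.trace_zero]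

end Matrix

lemma inv_sub_mul_inv_sub_add_cyclic {K : Type*} [Field K] {x y z : K}
    (hxy : x ≠ y) (hyz : y ≠ z) (hzx : z ≠ x) :
    (x - y)⁻¹ * (y - z)⁻¹ + (y - z)⁻¹ * (z - x)⁻¹ + (z - x)⁻¹ * (x - y)⁻¹ = 0 := by
  have := sub_ne_zero.2 hxy
  have := sub_ne_zero.2 hyz
  have := sub_ne_zero.2 hzx
  field_simp
  ring

section Bracket

variable {ι n p K R : Type*} [DecidableEq ι] [DecidableEq n] [CommRing K] [CommRing R]
  [Algebra K R]

/-- Canonical (Darboux) relations for pairs of matrices of functions, with respect to a bracket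
`{f, g}` encoded by its Hamiltonian derivations `ham f = {f, ·}`: the only nonzero brackets are
`{P_ij, Q_ji} = 1`. -/
structure IsCanonical [DecidableEq p] (ham : R → Derivation K R R)
    (Q : ι → Matrix n p R) (P : ι → Matrix p n R) : Prop where
  map_ham_q_q : ∀ α β i j, (Q β).map (ham (Q α i j)) = 0
  map_ham_p_p : ∀ α β i j, (P β).map (ham (P α i j)) = 0
  map_ham_p_q : ∀ α β i j,
    (Q β).map (ham (P α i j)) = if α = β then Matrix.single j i 1 else 0

/-- The Lie–Poisson relations `{A_ab, A_cd} = δ_bc A_ad - δ_ad A_cb` of a family of mutually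
commuting copies of `𝔤𝔩_n`, written for all entries `c, d` at once. -/
def IsLiePoisson [Fintype n] (ham : R → Derivation K R R) (A : ι → Matrix n n R) : Prop :=
  ∀ α β a b, (A β).map (ham (A α a b)) = if α = β then ⁅Matrix.single b a (1 : R), A α⁆ else 0

/-- The Gaudin Hamiltonian `H_i` with coupling constants `c i k`; the sum includes the Casimir
`Tr(A_i ^ 2)`, which is switched off by `c i i = 0`. -/
def gaudinHamiltonian [Fintype ι] [Fintype n] (c : ι → ι → K) (A : ι → Matrix n n R) (i : ι) : R :=
  ∑ k, c i k • (A i * A k).trace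

variable {ham : R → Derivation K R R}

namespace IsCanonical

variable [DecidableEq p] {Q : ι → Matrix n p R} {P : ι → Matrix p n R}

lemma map_ham_q_p (h : IsCanonical ham Q P) (skew : ∀ f g, ham f g = -ham g f)
    (α β : ι) (i : n) (j : p) :
    (P β).map (ham (Q α i j)) = if α = β then -Matrix.single j i 1 else 0 := by
  ext k l
  have hPQ : ham (P β k l) (Q α i j) = (if β = α then Matrix.single l k 1 else 0) i j := by
    rw [← h.map_ham_p_q, Matrix.map_apply]
  rw [Matrix.map_apply, skew, hPQ]
  by_cases hαβ : α = β <;> simp [hαβ, eq_comm, Matrix.single_apply, and_comm]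

variable [Fintype n] [Fintype p]

lemma map_ham_mul_q (h : IsCanonical ham Q P) (skew : ∀ f g, ham f g = -ham g f)
    (α β : ι) (a b : n) :
    (Q β).map (ham ((Q α * P α) a b)) =
      if α = β then Matrix.single b a (1 : R) * Q α else 0 := by
  ext c d
  have hQ : ham (Q β c d) ((Q α * P α) a b) =
      (Q α * if β = α then -Matrix.single d c (1 : R) else 0) a b := by
    rw [← Matrix.map_apply (f := ham (Q β c d)), map_derivation_mul, h.map_ham_q_q,
      h.map_ham_q_p skew, Matrix.zero_mul, zero_add]
  rw [Matrix.map_apply, skew, hQ]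
  rcases eq_or_ne α β with rfl | hαβ
  · simp [Matrix.mul_apply, Matrix.single_apply, ite_and, eq_comm]
  · simp [hαβ, hαβ.symm]

lemma map_ham_mul_p (h : IsCanonical ham Q P) (skew : ∀ f g, ham f g = -ham g f)
    (α β : ι) (a b : n) :
    (P β).map (ham ((Q α * P α) a b)) =
      if α = β then -(P α * Matrix.single b a (1 : R)) else 0 := by
  ext c d
  have hP : ham (P β c d) ((Q α * P α) a b) =
      ((if β = α then Matrix.single d c (1 : R) else 0) * P α) a b := by
    rw [← Matrix.map_apply (f := ham (P β c d)), map_derivation_mul, h.map_ham_p_p,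
      h.map_ham_p_q, Matrix.mul_zero, add_zero]
  rw [Matrix.map_apply, skew, hP]
  rcases eq_or_ne α β with rfl | hαβ
  · simp [Matrix.mul_apply, Matrix.single_apply, ite_and, eq_comm]
  · simp [hαβ, hαβ.symm]

theorem isLiePoisson_mul (h : IsCanonical ham Q P) (skew : ∀ f g, ham f g = -ham g f) :
    IsLiePoisson ham fun α => Q α * P α := by
  intro α β a b
  rw [map_derivation_mul, h.map_ham_mul_q skew, h.map_ham_mul_p skew]
  split_ifs with hαβ
  · subst hαβ
    rw [Ring.lie_def, Matrix.mul_neg, ← sub_eq_add_neg, Matrix.mul_assoc, Matrix.mul_assoc]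
  · rw [Matrix.zero_mul, Matrix.mul_zero, add_zero]

end IsCanonical

namespace IsLiePoisson

variable [Fintype n] {A : ι → Matrix n n R}

lemma ham_apply_trace_mul (h : IsLiePoisson ham A) (α β γ : ι) (a b : n) :
    ham (A α a b) (A β * A γ).trace =
      (if α = β then ⁅A α, A γ⁆ a b else 0) + (if α = γ then ⁅A α, A β⁆ a b else 0) := by
  have trace_single_lie (M N : Matrix n n R) :
      (⁅Matrix.single b a (1 : R), M⁆ * N).trace = ⁅M, N⁆ a b := by
    rw [trace_lie_mul, Matrix.trace_single_mul, one_smul]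
  rw [derivation_trace, map_derivation_mul, Matrix.trace_add, Matrix.trace_mul_comm (A β), h, h]
  simp only [ite_mul, zero_mul, apply_ite Matrix.trace, Matrix.trace_zero, trace_single_lie]

variable [Fintype ι]

lemma map_ham_gaudinHamiltonian (h : IsLiePoisson ham A) (skew : ∀ f g, ham f g = -ham g f)
    (c : ι → ι → K) (α j : ι) :
    (A α).map (ham (gaudinHamiltonian c A j)) =
      c j α • ⁅A j, A α⁆ + if α = j then ∑ k, c j k • ⁅A k, A α⁆ else 0 := by
  ext a b
  rw [Matrix.map_apply, skew, gaudinHamiltonian]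
  simp only [map_sum, Derivation.map_smul, h.ham_apply_trace_mul]
  simp only [smul_add, Finset.sum_add_distrib, smul_ite, smul_zero, Finset.sum_ite_eq,
    Finset.mem_univ, if_true]
  split_ifs
  · simp [Ring.lie_def, Matrix.sum_apply, smul_sub]
  · simp [Ring.lie_def, ← smul_neg]

theorem ham_gaudinHamiltonian (h : IsLiePoisson ham A) (skew : ∀ f g, ham f g = -ham g f)
    (c : ι → ι → K) {i j : ι} (hij : i ≠ j) :
    ham (gaudinHamiltonian c A i) (gaudinHamiltonian c A j) =
      ∑ k, (c j k * c i j + c j i * c i k - c j k * c i k) • (⁅A i, A j⁆ * A k).trace := by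
  have trace_flow_mul (k : ι) :
      ((A j).map (ham (gaudinHamiltonian c A i)) * A k).trace =
        c i j • (⁅A i, A j⁆ * A k).trace := by
    rw [h.map_ham_gaudinHamiltonian skew, if_neg hij.symm, add_zero, smul_mul_assoc,
      Matrix.trace_smul]
  have trace_mul_flow (k : ι) :
      (A j * (A k).map (ham (gaudinHamiltonian c A i))).trace =
        (if k = i then ∑ l, c i l • (⁅A i, A j⁆ * A l).trace else 0)
          - c i k • (⁅A i, A j⁆ * A k).trace := by
    have trace_mul_lie_eq_neg : (A j * ⁅A i, A k⁆).trace = -(⁅A i, A j⁆ * A k).trace := by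
      rw [← trace_lie_mul, trace_lie_mul_skew]
    rw [h.map_ham_gaudinHamiltonian skew, mul_add, Matrix.trace_add, mul_smul_comm,
      Matrix.trace_smul, trace_mul_lie_eq_neg, smul_neg, neg_add_eq_sub]
    split_ifs with hki
    · simp only [hki, Finset.mul_sum, Matrix.trace_sum, mul_smul_comm, Matrix.trace_smul,
        trace_mul_lie]
    · rw [mul_zero, Matrix.trace_zero]
  rw [gaudinHamiltonian.eq_def c A j]
  simp only [map_sum, Derivation.map_smul, derivation_trace, map_derivation_mul, Matrix.trace_add,
    trace_flow_mul, trace_mul_flow]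
  simp only [smul_add, smul_sub, smul_ite, smul_zero, Finset.smul_sum, smul_smul,
    Finset.sum_add_distrib, Finset.sum_sub_distrib, Finset.sum_ite_eq',
    Finset.mem_univ, if_true, sub_smul, add_smul, add_sub_assoc]

theorem pairwise_ham_gaudinHamiltonian_eq_zero (h : IsLiePoisson ham A)
    (skew : ∀ f g, ham f g = -ham g f) {c : ι → ι → K} (c_skew : ∀ i j, c i j = -c j i)
    (c_cyclic : ∀ i j k, i ≠ j → j ≠ k → k ≠ i →
      c i j * c j k + c j k * c k i + c k i * c i j = 0) :
    Pairwise fun i j => ham (gaudinHamiltonian c A i) (gaudinHamiltonian c A j) = 0 := by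
  intro i j hij
  rw [h.ham_gaudinHamiltonian skew c hij]
  refine Finset.sum_eq_zero fun k _ => ?_
  rcases eq_or_ne k i with rfl | hki
  · rw [trace_lie_mul_self_left, smul_zero]
  rcases eq_or_ne k j with rfl | hkj
  · rw [trace_lie_mul_self_right, smul_zero]
  have coeff_eq_zero : c j k * c i j + c j i * c i k - c j k * c i k = 0 := by
    rw [c_skew i k, c_skew j i]
    linear_combination c_cyclic i j k hij hkj.symm hki
  rw [coeff_eq_zero, zero_smul]

end IsLiePoisson

end Bracket

section Schlesinger

variable {N m : ℕ}

/-- The Hamiltonian derivation `{f, ·}` of the canonical Poisson bracket `pois`. -/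
noncomputable def poisDerivation (f : MvPolynomial (Idx N m) ℂ) :
    Derivation ℂ (MvPolynomial (Idx N m) ℂ) (MvPolynomial (Idx N m) ℂ) :=
  ∑ α : Fin N, ∑ i : Fin m, ∑ j : Fin m,
    (pderiv (α, true, i, j) f • pderiv (α, false, j, i)
      - pderiv (α, false, j, i) f • pderiv (α, true, i, j))

lemma poisDerivation_apply (f g : MvPolynomial (Idx N m) ℂ) : poisDerivation f g = pois f g := by
  simp only [poisDerivation, pois, ← Derivation.coeFnAddMonoidHom_apply, map_sum,
    Finset.sum_apply]
  simp only [Derivation.coeFnAddMonoidHom_apply, Derivation.sub_apply, Derivation.smul_apply,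
    smul_eq_mul, mul_comm (pderiv (_, true, _, _) g)]

lemma pois_self (f : MvPolynomial (Idx N m) ℂ) : pois f f = 0 := by
  simp only [pois, sub_self, Finset.sum_const_zero]

lemma pois_skew (f g : MvPolynomial (Idx N m) ℂ) : pois f g = -pois g f := by
  simp only [pois, ← Finset.sum_neg_distrib, neg_sub]

lemma poisDerivation_skew (f g : MvPolynomial (Idx N m) ℂ) :
    poisDerivation f g = -poisDerivation g f := by
  simp only [poisDerivation_apply, pois_skew f g]

lemma pois_X_false (α : Fin N) (i j : Fin m) (g : MvPolynomial (Idx N m) ℂ) :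
    pois (X (α, false, i, j)) g = -pderiv (α, true, j, i) g := by
  simp [pois, pderiv_X, Pi.single_apply, ite_and]

lemma pois_X_true (α : Fin N) (i j : Fin m) (g : MvPolynomial (Idx N m) ℂ) :
    pois (X (α, true, i, j)) g = pderiv (α, false, j, i) g := by
  simp [pois, pderiv_X, Pi.single_apply, ite_and]

theorem isCanonical_poisDerivation : IsCanonical poisDerivation (Qm N m) (Pm N m) where
  map_ham_q_q α β i j := by
    ext k l
    simp [Qm, poisDerivation_apply, pois_X_false, pderiv_X]
  map_ham_p_p α β i j := by
    ext k l
    simp [Pm, poisDerivation_apply, pois_X_true, pderiv_X]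
  map_ham_p_q α β i j := by
    ext k l
    by_cases hαβ : α = β <;>
      simp [Qm, Pm, poisDerivation_apply, pois_X_true, pderiv_X, hαβ, Pi.single_apply,
        Matrix.single_apply, eq_comm]

lemma Hschles_eq_gaudinHamiltonian (u : Fin N → ℂ) (i : Fin N) :
    Hschles N m u i =
      gaudinHamiltonian (fun i k => (u i - u k)⁻¹) (fun α => Qm N m α * Pm N m α) i := by
  rw [Hschles, gaudinHamiltonian, Finset.sum_erase _ (by simp)]
  simp only [smul_eq_C_mul, Matrix.mul_assoc]

end Schlesinger

/-- the lifted Schlesinger Hamiltonians pairwise Poisson-commute: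
`{H_i, H_j} = 0` for all `i, j`. -/
theorem statement14 (m n : ℕ) (hm : 1 ≤ m) (hn : 2 ≤ n)
    (u : Fin n → ℂ) (hu : Function.Injective u) (i j : Fin n) :
    pois (Hschles n m u i) (Hschles n m u j) = 0 := by
  rcases eq_or_ne i j with rfl | hij
  · exact pois_self _
  have residues_isLiePoisson : IsLiePoisson poisDerivation fun α => Qm n m α * Pm n m α :=
    isCanonical_poisDerivation.isLiePoisson_mul poisDerivation_skew
  rw [← poisDerivation_apply, Hschles_eq_gaudinHamiltonian, Hschles_eq_gaudinHamiltonian]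
  refine residues_isLiePoisson.pairwise_ham_gaudinHamiltonian_eq_zero poisDerivation_skew
    (fun i j => ?_) (fun i j k hij hjk hki => ?_) hij
  · rw [← inv_neg, neg_sub]
  · exact inv_sub_mul_inv_sub_add_cyclic (hu.ne hij) (hu.ne hjk) (hu.ne hki)
end
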